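/- arXiv:1011.1544 — 2 statements merged into one kernel-verified Lean document; each statement's English description precedes it below -/
import Mathlib

section
/- Let m ≥ 2, let U ⊆ ℝ^m be open, let (f, ν) be a front on U with values in ℝ^{m+1}, and let p ∈ U be an A₂-point of f such that all singular points near p are A₂-points. Suppose there exist an open neighborhood V ⊆ U of p, a smooth vector field η̃ on V whose restriction to Σ∩V is a null vector field (df(η̃) = 0 on Σ∩V, η̃ ≠ 0), and a constant δ > 0 such that K^ext(X, η̃(q))(q) ≥ δ for every q ∈ V∖Σ and every X ∈ ℝ^m with X and η̃(q) linearly independent. Then every singular principal curvature of f at p is strictly negative. -/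
open scoped Matrix

noncomputable section

/-- Partial derivative of a vector-valued map in the `k`-th coordinate direction. -/
def pd {m N : ℕ} (k : Fin m) (f : (Fin m → ℝ) → (Fin N → ℝ)) :
    (Fin m → ℝ) → (Fin N → ℝ) :=
  fun q => fderiv ℝ f q (Pi.single k 1)

/-- The Jacobian function `λ(q) = det(∂_1 f, …, ∂_m f, ν)` of a frontal `(f, ν)`. -/
def lamb {m : ℕ} (f ν : (Fin m → ℝ) → (Fin (m + 1) → ℝ)) (q : Fin m → ℝ) : ℝ :=
  Matrix.det (Matrix.of (Fin.snoc (fun k : Fin m => pd k f q) (ν q)))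

/-- `p` is an `A₂`-point of the frontal `(f, ν)`: a nondegenerate singular point at which
the null direction is transversal to the singular hypersurface, i.e. `dλ_p(η) ≠ 0` for
(any) nonzero null vector `η`. -/
def IsA2 {m : ℕ} (f ν : (Fin m → ℝ) → (Fin (m + 1) → ℝ)) (p : Fin m → ℝ) : Prop :=
  lamb f ν p = 0 ∧ fderiv ℝ (lamb f ν) p ≠ 0 ∧
  ∀ X : Fin m → ℝ, X ≠ 0 → fderiv ℝ f p X = 0 → fderiv ℝ (lamb f ν) p X ≠ 0

/-- The extrinsic curvature `K^ext(X ∧ Y) = (II(X,X)II(Y,Y) − II(X,Y)²)/(I(X,X)I(Y,Y) − I(X,Y)²)`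
of the plane spanned by `X, Y` at `q`, where `I(X,Y) = ⟨df X, df Y⟩` and
`II(X,Y) = −⟨df X, dν Y⟩`. -/
def Kext {m : ℕ} (f ν : (Fin m → ℝ) → (Fin (m + 1) → ℝ)) (q : Fin m → ℝ)
    (X Y : Fin m → ℝ) : ℝ :=
  ((fderiv ℝ f q X ⬝ᵥ fderiv ℝ ν q X) * (fderiv ℝ f q Y ⬝ᵥ fderiv ℝ ν q Y)
      - (fderiv ℝ f q X ⬝ᵥ fderiv ℝ ν q Y) ^ 2) /
    ((fderiv ℝ f q X ⬝ᵥ fderiv ℝ f q X) * (fderiv ℝ f q Y ⬝ᵥ fderiv ℝ f q Y)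
      - (fderiv ℝ f q X ⬝ᵥ fderiv ℝ f q Y) ^ 2)


/-- `κ` is a singular principal curvature of the front `(f, ν)` at `p` with (singular
principal) eigendirection `X` tangent to the singular hypersurface: there are a smooth unit
conormal field `n` near `p` (orthogonal to `ν` and to the image of the tangent spaces of
the singular hypersurface), a nonzero null vector `η` at `p` and an `I`-orthonormal frame
`c` of the tangent space of the singular hypersurface at `p` such that `(c, η)` is
positively oriented, `(df(c), n, ν)` is positively oriented, and the singular shape
operator equation `D_X n = −sgn(dλ_p(η)) κ · df_p(X)` holds, where
`D_X n = ∂_X n − ⟨∂_X n, ν⟩ν` is the tangential part of `∂_X n`. -/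
def IsSingPrincCurvVec {m : ℕ} (f ν : (Fin m → ℝ) → (Fin (m + 1) → ℝ))
    (p : Fin m → ℝ) (κ : ℝ) (X : Fin m → ℝ) : Prop :=
  X ≠ 0 ∧ fderiv ℝ (lamb f ν) p X = 0 ∧
  ∃ (W : Set (Fin m → ℝ)) (n : (Fin m → ℝ) → (Fin (m + 1) → ℝ))
    (c : Fin m → (Fin m → ℝ)) (η : Fin m → ℝ),
    IsOpen W ∧ p ∈ W ∧ ContDiffOn ℝ (⊤ : ℕ∞) n W ∧
    (∀ q ∈ W, lamb f ν q = 0 →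
      n q ⬝ᵥ n q = 1 ∧ n q ⬝ᵥ ν q = 0 ∧
      ∀ Z : Fin m → ℝ, fderiv ℝ (lamb f ν) q Z = 0 → n q ⬝ᵥ fderiv ℝ f q Z = 0) ∧
    fderiv ℝ f p η = 0 ∧ η ≠ 0 ∧
    (∀ i : Fin m, (i : ℕ) < m - 1 → fderiv ℝ (lamb f ν) p (c i) = 0) ∧
    (∀ i j : Fin m, (i : ℕ) < m - 1 → (j : ℕ) < m - 1 →
      fderiv ℝ f p (c i) ⬝ᵥ fderiv ℝ f p (c j) = (if i = j then (1 : ℝ) else 0)) ∧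
    0 < Matrix.det (Matrix.of fun i : Fin m =>
        if (i : ℕ) < m - 1 then c i else η) ∧
    0 < Matrix.det (Matrix.of fun i : Fin (m + 1) =>
        if h : (i : ℕ) < m - 1 then fderiv ℝ f p (c ⟨(i : ℕ), by omega⟩)
        else if (i : ℕ) = m - 1 then n p else ν p) ∧
    fderiv ℝ n p X - (fderiv ℝ n p X ⬝ᵥ ν p) • ν p
      = (-(Real.sign (fderiv ℝ (lamb f ν) p η)) * κ) • fderiv ℝ f p X

/-!
Write `h(Y, Z) = ⟨d²f_p(Y, Z), n⟩` for the conormal `n` and `ξ` for the null field. Differentiating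
the Jacobian determinant in a frame containing the null vector `η` shows that `h(·, η)` is a
multiple of `dλ_p`, positive because of the orientation conventions, so
`dλ_p(η) h(ξ, ξ) > 0`. Differentiating `⟨df, n⟩ = 0` along the singular set identifies
`h(X, X)` with `sgn(dλ_p(η)) κ |df_p X|²` for a singular principal direction `X`. It remains to see
that `h(X, X)` and `h(ξ, ξ)` have opposite signs.

A lower bound `δ > 0` on the curvature gives `δ · gram(df Z, df ξ) ≤ II(Z, Z) II(ξ, ξ)`, and along
the line `t ↦ p + t ξ_p` the factor `II(ξ, ξ)` vanishes at `t = 0` with nonzero derivative since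
`(f, ν)` is a front. To first order this forces `II(Z, Z) = 0` for every `Z` tangent to the singular
set, hence `II(X, ·) = 0` by polarization. To second order it bounds the product of the derivatives
of `II(X, X)` and `II(ξ, ξ)` from below by a positive number. By the Codazzi symmetry this product
is `-⟨dν_p ξ, n⟩² h(X, X) h(ξ, ξ)`.
-/

open Filter Topology

section LinearAlgebra

variable {K V : Type*} [Field K] [AddCommGroup V] [Module K V] {φ : V →ₗ[K] K}

lemma dotProduct_eq_zero_of_ker {ι : Type*} [Fintype ι] {T : V →ₗ[K] ι → K} {x : V} {v : ι → K}
    (hφx : φ x ≠ 0) (hTx : T x = 0) (hker : ∀ y, φ y = 0 → T y ⬝ᵥ v = 0) (y : V) :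
    T y ⬝ᵥ v = 0 := by
  have hproj : φ (y - (φ y / φ x) • x) = 0 := by
    rw [map_sub, map_smul, smul_eq_mul, div_mul_cancel₀ _ hφx, sub_self]
  simpa [hTx] using hker _ hproj

lemma linearIndependent_pair_of_ker {x y : V} (hx : φ x = 0) (hx₀ : x ≠ 0) (hy : φ y ≠ 0) :
    LinearIndependent K ![x, y] := by
  refine LinearIndependent.pair_iff.2 fun s t hst => ?_
  have ht : t = 0 := by simpa [hx, hy] using congr(φ $hst)
  subst ht
  simpa [hx₀] using hst

end LinearAlgebra

section Calculus

variable {E F : Type*} [NormedAddCommGroup E] [NormedSpace ℝ E] [NormedAddCommGroup F]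
  [NormedSpace ℝ F]

lemma contDiffAt_dotProduct {ι : Type*} [Fintype ι] {a b : E → ι → ℝ} {p : E} {r : WithTop ℕ∞}
    (ha : ContDiffAt ℝ r a p) (hb : ContDiffAt ℝ r b p) :
    ContDiffAt ℝ r (fun q => a q ⬝ᵥ b q) p :=
  ContDiffAt.sum fun i _ => (contDiffAt_pi.1 ha i).mul (contDiffAt_pi.1 hb i)

lemma fderiv_dotProduct_apply {ι : Type*} [Fintype ι] {a b : E → ι → ℝ} {p : E}
    (ha : DifferentiableAt ℝ a p) (hb : DifferentiableAt ℝ b p) (v : E) :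
    fderiv ℝ (fun q => a q ⬝ᵥ b q) p v = fderiv ℝ a p v ⬝ᵥ b p + a p ⬝ᵥ fderiv ℝ b p v := by
  have ha' := hasFDerivAt_pi'.1 ha.hasFDerivAt
  have hb' := hasFDerivAt_pi'.1 hb.hasFDerivAt
  have hsum := HasFDerivAt.fun_sum (u := .univ) fun i _ => (ha' i).mul (hb' i)
  refine congr($hsum.fderiv v).trans ?_
  simp [dotProduct, Finset.sum_add_distrib, mul_comm, add_comm]

lemma contDiffAt_fderiv_apply {g : E → F} {η : E → E} {p : E} (hg : ContDiffAt ℝ 2 g p)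
    (hη : ContDiffAt ℝ 1 η p) :
    ContDiffAt ℝ 1 (fun q => fderiv ℝ g q (η q)) p :=
  (hg.fderiv_right (m := 1) (by norm_num)).clm_apply hη

lemma fderiv_fderiv_apply {g : E → F} {η : E → E} {p : E} (hg : ContDiffAt ℝ 2 g p)
    (hη : DifferentiableAt ℝ η p) (v : E) :
    fderiv ℝ (fun q => fderiv ℝ g q (η q)) p v =
      fderiv ℝ (fderiv ℝ g) p v (η p) + fderiv ℝ g p (fderiv ℝ η p v) := by
  have hdg := (hg.fderiv_right (m := 1) (by norm_num)).differentiableAt one_ne_zero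
  simp [fderiv_clm_apply hdg hη, add_comm]

lemma fderiv_fderiv_const_apply {g : E → F} {p : E} (hg : ContDiffAt ℝ 2 g p) (X v : E) :
    fderiv ℝ (fun q => fderiv ℝ g q X) p v = fderiv ℝ (fderiv ℝ g) p v X := by
  simpa using fderiv_fderiv_apply hg (differentiableAt_const X) v

lemma fderiv_apply_eq_zero_of_eventually_eq_zero_on_zeroSet [CompleteSpace E]
    {l φ : E → ℝ} {p X : E} (hl : ContDiffAt ℝ 1 l p) (hφ : ContDiffAt ℝ 1 φ p)
    (hlp : l p = 0) (hdl : fderiv ℝ l p ≠ 0) (hvan : ∀ᶠ q in 𝓝 p, l q = 0 → φ q = 0)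
    (hX : fderiv ℝ l p X = 0) : fderiv ℝ φ p X = 0 := by
  have hextr : IsLocalExtrOn φ {q | l q = l p} p := by
    refine .inl (eventually_nhdsWithin_iff.2 ?_)
    filter_upwards [hvan] with q hq hlq
    exact (hvan.self_of_nhds hlp).trans_le (hq (hlq.trans hlp)).ge
  obtain ⟨a, b, hab, hsum⟩ := hextr.exists_multipliers_of_hasStrictFDerivAt_1d
    (hl.hasStrictFDerivAt one_ne_zero) (hφ.hasStrictFDerivAt one_ne_zero)
  have hb : b ≠ 0 := by
    rintro rfl
    have ha : a = 0 := by simpa [hdl] using hsum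
    exact hab (by rw [ha]; rfl)
  simpa [hX, hb] using congr($hsum X)

lemma tendsto_line (p v : E) : Tendsto (fun t : ℝ => p + t • v) (𝓝 0) (𝓝 p) := by
  have hcont : Continuous fun t : ℝ => p + t • v := by fun_prop
  simpa using hcont.tendsto 0

lemma hasDerivAt_comp_line {g : E → F} {p : E} (hg : DifferentiableAt ℝ g p) (v : E) :
    HasDerivAt (fun t : ℝ => g (p + t • v)) (fderiv ℝ g p v) 0 :=
  hg.hasFDerivAt.hasLineDerivAt v

lemma mul_deriv_eq_zero_of_mul_nonneg {A B : ℝ → ℝ} {A' B' t₀ : ℝ}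
    (hA : HasDerivAt A A' t₀) (hB : HasDerivAt B B' t₀) (hB₀ : B t₀ = 0)
    (hAB : ∀ᶠ t in 𝓝[≠] t₀, 0 ≤ A t * B t) : A t₀ * B' = 0 := by
  have hmin : IsLocalMin (fun t => A t * B t) t₀ := by
    refine eventually_nhdsWithin_iff.1 hAB |>.mono fun t ht => ?_
    rcases eq_or_ne t t₀ with rfl | hne
    · exact le_rfl
    · simpa only [hB₀, mul_zero] using ht hne
  simpa [hB₀] using hmin.hasDerivAt_eq_zero (hA.mul hB)

lemma tendsto_inv_smul_of_hasDerivAt_zero {g : ℝ → F} {g' : F} (hg : HasDerivAt g g' 0)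
    (hg₀ : g 0 = 0) : Tendsto (fun t => t⁻¹ • g t) (𝓝[≠] 0) (𝓝 g') := by
  simpa [hg₀] using hg.tendsto_slope_zero

lemma le_mul_deriv_of_le_mul {A B D : ℝ → ℝ} {A' B' D₀ : ℝ}
    (hA : HasDerivAt A A' 0) (hB : HasDerivAt B B' 0) (hA₀ : A 0 = 0) (hB₀ : B 0 = 0)
    (hD : Tendsto (fun t => D t / t ^ 2) (𝓝[≠] 0) (𝓝 D₀))
    (hle : ∀ᶠ t in 𝓝[≠] 0, D t ≤ A t * B t) : D₀ ≤ A' * B' := by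
  refine le_of_tendsto_of_tendsto hD ((tendsto_inv_smul_of_hasDerivAt_zero hA hA₀).mul
    (tendsto_inv_smul_of_hasDerivAt_zero hB hB₀)) ?_
  filter_upwards [hle] with t ht
  calc D t / t ^ 2 ≤ A t * B t / t ^ 2 := by gcongr
    _ = t⁻¹ • A t * t⁻¹ • B t := by simp only [smul_eq_mul]; ring

end Calculus

section Determinants

lemma det_updateRow_mul_dotProduct_self {ι R : Type*} [Fintype ι] [DecidableEq ι] [CommRing R]
    (A : Matrix ι ι R) (i : ι) (y n : ι → R) (hn : ∀ j ≠ i, A j ⬝ᵥ n = 0) :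
    (A.updateRow i y).det * (n ⬝ᵥ n) = (y ⬝ᵥ n) * (A.updateRow i n).det := by
  have hmul : A.updateRow i y *ᵥ n = Pi.single i (y ⬝ᵥ n) := by
    ext j
    rcases eq_or_ne j i with rfl | hj
    · simp [Matrix.mulVec]
    · simpa [Matrix.mulVec, hj] using hn j hj
  have hcramer : (n ᵥ* (A.updateRow i y).adjugate) i = (A.updateRow i n).det := by
    rw [← Matrix.mulVec_transpose, Matrix.adjugate_transpose, ← Matrix.cramer_eq_adjugate_mulVec,
      Matrix.cramer_transpose_apply, Matrix.updateRow_idem]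
  calc (A.updateRow i y).det * (n ⬝ᵥ n)
      = n ⬝ᵥ ((A.updateRow i y).adjugate *ᵥ (A.updateRow i y *ᵥ n)) := by
        rw [Matrix.mulVec_mulVec, Matrix.adjugate_mul, Matrix.smul_mulVec, Matrix.one_mulVec,
          dotProduct_smul, smul_eq_mul]
    _ = (y ⬝ᵥ n) * (A.updateRow i n).det := by
        rw [hmul, Matrix.dotProduct_mulVec, dotProduct_single, hcramer, mul_comm]

/-- The determinant as a continuous multilinear function of the rows, which gives access to the
differentiation rules for multilinear maps. -/
def detContinuousMultilinear (ι : Type*) [Fintype ι] [DecidableEq ι] :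
    ContinuousMultilinearMap ℝ (fun _ : ι => ι → ℝ) ℝ where
  __ := (Matrix.detRowAlternating : (ι → ℝ) [⋀^ι]→ₗ[ℝ] ℝ)
  cont := continuous_id.matrix_det

lemma contDiffAt_det {E ι : Type*} [NormedAddCommGroup E] [NormedSpace ℝ E] [Fintype ι]
    [DecidableEq ι] {A : E → ι → ι → ℝ} {p : E} {r : WithTop ℕ∞}
    (hA : ∀ i, ContDiffAt ℝ r (fun q => A q i) p) :
    ContDiffAt ℝ r (fun q => (Matrix.of (A q)).det) p :=
  (detContinuousMultilinear ι).contDiff.contDiffAt.comp p (contDiffAt_pi.2 hA)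

lemma fderiv_det_apply_of_row_eq_zero {E ι : Type*} [NormedAddCommGroup E] [NormedSpace ℝ E]
    [Fintype ι] [DecidableEq ι] {A : E → ι → ι → ℝ} {p : E} {i : ι}
    (hA : ∀ j, DifferentiableAt ℝ (fun q => A q j) p) (hi : A p i = 0) (v : E) :
    fderiv ℝ (fun q => (Matrix.of (A q)).det) p v =
      ((Matrix.of (A p)).updateRow i (fderiv ℝ (fun q => A q i) p v)).det := by
  have hsum : fderiv ℝ (fun q => (Matrix.of (A q)).det) p v =
      ∑ j, ((Matrix.of (A p)).updateRow j (fderiv ℝ (fun q => A q j) p v)).det := by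
    have hdet := HasFDerivAt.multilinear_comp (f := detContinuousMultilinear ι)
      fun j => (hA j).hasFDerivAt
    refine congr($hdet.fderiv v).trans ?_
    simp only [_root_.sum_apply, ContinuousLinearMap.comp_apply]
    rfl
  rw [hsum, Finset.sum_eq_single_of_mem i (Finset.mem_univ i)]
  intro j _ hj
  refine Matrix.det_eq_zero_of_row_eq_zero i fun k => ?_
  rw [Matrix.updateRow_ne hj.symm, Matrix.of_apply, hi, Pi.zero_apply]

end Determinants

section Frontal

variable {E ι : Type*} [NormedAddCommGroup E] [NormedSpace ℝ E] [Fintype ι]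

/-- The germ at `p` of a frontal of class `C²`. -/
structure IsFrontalAt (f ν : E → ι → ℝ) (p : E) : Prop where
  contDiffAt : ContDiffAt ℝ 2 f p
  contDiffAt_normal : ContDiffAt ℝ 2 ν p
  eventually_unit : ∀ᶠ q in 𝓝 p, ν q ⬝ᵥ ν q = 1
  eventually_tangent : ∀ᶠ q in 𝓝 p, ∀ X, fderiv ℝ f q X ⬝ᵥ ν q = 0

namespace IsFrontalAt

variable {f ν : E → ι → ℝ} {p : E}

lemma eventually (h : IsFrontalAt f ν p) : ∀ᶠ q in 𝓝 p, IsFrontalAt f ν q := by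
  filter_upwards [h.contDiffAt.eventually (by decide), h.contDiffAt_normal.eventually (by decide),
    h.eventually_unit.eventually_nhds, h.eventually_tangent.eventually_nhds] with q hf hν hu ht
  exact ⟨hf, hν, hu, ht⟩

lemma fderiv_normal_dotProduct_normal (h : IsFrontalAt f ν p) (X : E) :
    fderiv ℝ ν p X ⬝ᵥ ν p = 0 := by
  have hd := h.contDiffAt_normal.differentiableAt two_ne_zero
  have hconst : fderiv ℝ (fun q => ν q ⬝ᵥ ν q) p X = 0 := by
    rw [EventuallyEq.fderiv_eq (f := fun _ => (1 : ℝ)) h.eventually_unit]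
    simp
  rw [fderiv_dotProduct_apply hd hd, dotProduct_comm (ν p)] at hconst
  linarith

lemma fderiv_fderiv_dotProduct_normal (h : IsFrontalAt f ν p) (X Y : E) :
    fderiv ℝ (fderiv ℝ f) p Y X ⬝ᵥ ν p = -(fderiv ℝ f p X ⬝ᵥ fderiv ℝ ν p Y) := by
  have hconst : fderiv ℝ (fun q => fderiv ℝ f q X ⬝ᵥ ν q) p Y = 0 := by
    rw [EventuallyEq.fderiv_eq (f := fun _ => (0 : ℝ)) (h.eventually_tangent.mono fun q hq => hq X)]
    simp
  rw [fderiv_dotProduct_apply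
    ((contDiffAt_fderiv_apply h.contDiffAt contDiffAt_const).differentiableAt one_ne_zero)
    (h.contDiffAt_normal.differentiableAt two_ne_zero),
    fderiv_fderiv_const_apply h.contDiffAt] at hconst
  linarith

lemma isSymmSndFDerivAt (h : IsFrontalAt f ν p) : IsSymmSndFDerivAt ℝ f p :=
  h.contDiffAt.isSymmSndFDerivAt (by simp)

lemma isSymmSndFDerivAt_normal (h : IsFrontalAt f ν p) : IsSymmSndFDerivAt ℝ ν p :=
  h.contDiffAt_normal.isSymmSndFDerivAt (by simp)

lemma secondForm_comm (h : IsFrontalAt f ν p) (X Y : E) :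
    fderiv ℝ f p X ⬝ᵥ fderiv ℝ ν p Y = fderiv ℝ f p Y ⬝ᵥ fderiv ℝ ν p X := by
  rw [← neg_inj, ← h.fderiv_fderiv_dotProduct_normal, ← h.fderiv_fderiv_dotProduct_normal,
    h.isSymmSndFDerivAt.eq]

lemma differentiableAt_secondForm_self (h : IsFrontalAt f ν p) {X : E → E}
    (hX : ContDiffAt ℝ 1 X p) :
    DifferentiableAt ℝ (fun q => fderiv ℝ f q (X q) ⬝ᵥ fderiv ℝ ν q (X q)) p :=
  (contDiffAt_dotProduct (contDiffAt_fderiv_apply h.contDiffAt hX)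
    (contDiffAt_fderiv_apply h.contDiffAt_normal hX)).differentiableAt one_ne_zero

lemma fderiv_secondForm_apply (h : IsFrontalAt f ν p) (X Y Z : E) :
    fderiv ℝ (fun q => fderiv ℝ f q X ⬝ᵥ fderiv ℝ ν q Y) p Z =
      fderiv ℝ (fderiv ℝ f) p Z X ⬝ᵥ fderiv ℝ ν p Y +
        fderiv ℝ f p X ⬝ᵥ fderiv ℝ (fderiv ℝ ν) p Z Y := by
  rw [fderiv_dotProduct_apply
    ((contDiffAt_fderiv_apply h.contDiffAt contDiffAt_const).differentiableAt one_ne_zero)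
    ((contDiffAt_fderiv_apply h.contDiffAt_normal contDiffAt_const).differentiableAt one_ne_zero),
    fderiv_fderiv_const_apply h.contDiffAt, fderiv_fderiv_const_apply h.contDiffAt_normal]

lemma fderiv_secondForm_comm (h : IsFrontalAt f ν p) (X Y Z : E) :
    fderiv ℝ (fderiv ℝ f) p Z X ⬝ᵥ fderiv ℝ ν p Y + fderiv ℝ f p X ⬝ᵥ fderiv ℝ (fderiv ℝ ν) p Z Y =
      fderiv ℝ (fderiv ℝ f) p Z Y ⬝ᵥ fderiv ℝ ν p X +
        fderiv ℝ f p Y ⬝ᵥ fderiv ℝ (fderiv ℝ ν) p Z X := by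
  rw [← h.fderiv_secondForm_apply, ← h.fderiv_secondForm_apply,
    EventuallyEq.fderiv_eq (h.eventually.mono fun q hq => hq.secondForm_comm X Y)]

end IsFrontalAt

end Frontal

section Jacobian

lemma det_snoc_map {R : Type*} [CommRing R] {m : ℕ} (T : (Fin m → R) →ₗ[R] Fin (m + 1) → R)
    (M : Fin m → Fin m → R) (y : Fin (m + 1) → R) :
    (Matrix.of (Fin.snoc (fun k => T (M k)) y : Fin (m + 1) → Fin (m + 1) → R)).det =
      (Matrix.of M).det *
        (Matrix.of (Fin.snoc (fun k => T (Pi.single k 1)) y :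
          Fin (m + 1) → Fin (m + 1) → R)).det := by
  set C : Matrix (Fin (m + 1)) (Fin (m + 1)) R :=
    Matrix.of (Fin.snoc (fun k => Fin.snoc (M k) 0) (Pi.single (Fin.last m) 1)) with hC
  have hdet : C.det = (Matrix.of M).det := by
    rw [Matrix.det_succ_row C (Fin.last m), Finset.sum_eq_single_of_mem (Fin.last m) (by simp)]
    · have hminor : C.submatrix (Fin.last m).succAbove (Fin.last m).succAbove = Matrix.of M := by
        ext i j
        simp [hC]
      rw [hminor]
      simp [hC, ← two_mul]
    · intro j _ hj
      simp [hC, hj]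
  rw [← hdet, ← Matrix.det_mul]
  congr 1
  ext i j
  rw [Matrix.mul_apply, Fin.sum_univ_castSucc]
  induction i using Fin.lastCases with
  | last => simp [hC, Fin.castSucc_ne_last]
  | cast i =>
    simp only [hC, Matrix.of_apply, Fin.snoc_castSucc, Fin.snoc_last, zero_mul, add_zero]
    conv_lhs => rw [pi_eq_sum_univ' (M i), map_sum]
    simp [Finset.sum_apply]

variable {m : ℕ} {f ν : (Fin m → ℝ) → Fin (m + 1) → ℝ} {p : Fin m → ℝ}

lemma det_mul_lamb (f ν : (Fin m → ℝ) → Fin (m + 1) → ℝ) (q : Fin m → ℝ)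
    (M : Fin m → Fin m → ℝ) :
    (Matrix.of M).det * lamb f ν q =
      (Matrix.of (Fin.snoc (fun k => fderiv ℝ f q (M k)) (ν q) :
        Fin (m + 1) → Fin (m + 1) → ℝ)).det :=
  (det_snoc_map (fderiv ℝ f q : (Fin m → ℝ) →ₗ[ℝ] Fin (m + 1) → ℝ) M (ν q)).symm

lemma IsFrontalAt.contDiffAt_rows (h : IsFrontalAt f ν p) (M : Fin m → Fin m → ℝ)
    (i : Fin (m + 1)) :
    ContDiffAt ℝ 1 (fun q => (Fin.snoc (fun k => fderiv ℝ f q (M k)) (ν q) :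
      Fin (m + 1) → Fin (m + 1) → ℝ) i) p := by
  induction i using Fin.lastCases with
  | last => simpa only [Fin.snoc_last] using h.contDiffAt_normal.of_le one_le_two
  | cast i =>
    simpa only [Fin.snoc_castSucc] using contDiffAt_fderiv_apply h.contDiffAt contDiffAt_const

lemma IsFrontalAt.contDiffAt_lamb (h : IsFrontalAt f ν p) : ContDiffAt ℝ 1 (lamb f ν) p :=
  contDiffAt_det (h.contDiffAt_rows fun k => Pi.single k 1)

/-- The germ at `p` of a `C¹` vector field, nonzero at `p`, whose restriction to the singular set of
the frontal `(f, ν)` is a null vector field. -/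
structure IsNullFieldAt (f ν : (Fin m → ℝ) → Fin (m + 1) → ℝ) (ξ : (Fin m → ℝ) → Fin m → ℝ)
    (p : Fin m → ℝ) : Prop where
  contDiffAt : ContDiffAt ℝ 1 ξ p
  ne_zero : ξ p ≠ 0
  eventually_null : ∀ᶠ q in 𝓝 p, lamb f ν q = 0 → fderiv ℝ f q (ξ q) = 0

namespace IsNullFieldAt

variable {ξ : (Fin m → ℝ) → Fin m → ℝ}

lemma null (hξ : IsNullFieldAt f ν ξ p) (hA2 : IsA2 f ν p) : fderiv ℝ f p (ξ p) = 0 :=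
  hξ.eventually_null.self_of_nhds hA2.1

lemma fderiv_lamb_ne_zero (hξ : IsNullFieldAt f ν ξ p) (hA2 : IsA2 f ν p) :
    fderiv ℝ (lamb f ν) p (ξ p) ≠ 0 :=
  hA2.2.2 _ hξ.ne_zero (hξ.null hA2)

end IsNullFieldAt

lemma IsA2.eq_smul {η v : Fin m → ℝ} (h : IsA2 f ν p) (hη : fderiv ℝ f p η = 0)
    (hη₀ : η ≠ 0) (hv : fderiv ℝ f p v = 0) :
    v = (fderiv ℝ (lamb f ν) p v / fderiv ℝ (lamb f ν) p η) • η := by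
  by_contra hne
  refine h.2.2 _ (sub_ne_zero.2 hne) (by simp [hη, hv]) ?_
  rw [map_sub, map_smul, smul_eq_mul, div_mul_cancel₀ _ (h.2.2 η hη₀ hη), sub_self]

/-- The matrix with rows `df_p(M_k)` for `k ≠ i`, the vector `y` in the slot of `M_i`, and the
normal `ν p` as last row. -/
def frameMatrix (f ν : (Fin m → ℝ) → Fin (m + 1) → ℝ) (p : Fin m → ℝ) (M : Fin m → Fin m → ℝ)
    (i : Fin m) (y : Fin (m + 1) → ℝ) : Matrix (Fin (m + 1)) (Fin (m + 1)) ℝ :=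
  (Matrix.of (Fin.snoc (fun k => fderiv ℝ f p (M k)) (ν p))).updateRow i.castSucc y

lemma IsFrontalAt.det_mul_fderiv_lamb (h : IsFrontalAt f ν p) {M : Fin m → Fin m → ℝ} {i : Fin m}
    (hi : fderiv ℝ f p (M i) = 0) (Z : Fin m → ℝ) :
    (Matrix.of M).det * fderiv ℝ (lamb f ν) p Z =
      (frameMatrix f ν p M i (fderiv ℝ (fderiv ℝ f) p Z (M i))).det := by
  have hlamb : DifferentiableAt ℝ (lamb f ν) p := h.contDiffAt_lamb.differentiableAt one_ne_zero
  calc (Matrix.of M).det * fderiv ℝ (lamb f ν) p Z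
      = fderiv ℝ (fun q => (Matrix.of M).det * lamb f ν q) p Z := by
        rw [fderiv_const_mul hlamb]; rfl
    _ = (frameMatrix f ν p M i (fderiv ℝ (fderiv ℝ f) p Z (M i))).det := by
        simp only [det_mul_lamb]
        rw [fderiv_det_apply_of_row_eq_zero (i := i.castSucc)
          (fun j => (h.contDiffAt_rows M j).differentiableAt one_ne_zero) (by simpa using hi)]
        simp only [Fin.snoc_castSucc, fderiv_fderiv_const_apply h.contDiffAt, frameMatrix]

lemma frameMatrix_dotProduct {M : Fin m → Fin m → ℝ} {i : Fin m} {y v : Fin (m + 1) → ℝ}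
    (hf : ∀ Z, fderiv ℝ f p Z ⬝ᵥ v = 0) (hν : ν p ⬝ᵥ v = 0) {j : Fin (m + 1)}
    (hj : j ≠ i.castSucc) : frameMatrix f ν p M i y j ⬝ᵥ v = 0 := by
  have hrow : frameMatrix f ν p M i y j =
      (Fin.snoc (fun k => fderiv ℝ f p (M k)) (ν p) : Fin (m + 1) → Fin (m + 1) → ℝ) j :=
    Matrix.updateRow_ne hj
  rw [hrow]
  induction j using Fin.lastCases with
  | last => rwa [Fin.snoc_last]
  | cast j => rw [Fin.snoc_castSucc, hf]

end Jacobian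

section Conormal

variable {m : ℕ} {f ν n : (Fin m → ℝ) → Fin (m + 1) → ℝ} {p η X : Fin m → ℝ}

/-- `n` is a unit conormal field of the frontal `(f, ν)` along the singular set near `p`, and the
null vector `η` at `p` is oriented compatibly with it: replacing `η` by the conormal takes some
positive basis of the domain to a positive basis `(…, n p, …, ν p)` of the target. -/
structure IsConormalAt (f ν n : (Fin m → ℝ) → Fin (m + 1) → ℝ) (p η : Fin m → ℝ) : Prop where
  contDiffAt : ContDiffAt ℝ 1 n p
  eventually_orthogonal : ∀ᶠ q in 𝓝 p, lamb f ν q = 0 →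
    ∀ Z, fderiv ℝ (lamb f ν) q Z = 0 → fderiv ℝ f q Z ⬝ᵥ n q = 0
  unit : n p ⬝ᵥ n p = 1
  orthogonal_normal : n p ⬝ᵥ ν p = 0
  null : fderiv ℝ f p η = 0
  null_ne_zero : η ≠ 0
  exists_frame : ∃ (M : Fin m → Fin m → ℝ) (i : Fin m), M i = η ∧ 0 < (Matrix.of M).det ∧
    0 < (frameMatrix f ν p M i (n p)).det

lemma IsSingPrincCurvVec.exists_isConormalAt {κ : ℝ} (h : IsSingPrincCurvVec f ν p κ X)
    (hp : lamb f ν p = 0) :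
    ∃ n η, IsConormalAt f ν n p η ∧ fderiv ℝ n p X - (fderiv ℝ n p X ⬝ᵥ ν p) • ν p =
      (-(Real.sign (fderiv ℝ (lamb f ν) p η)) * κ) • fderiv ℝ f p X := by
  obtain ⟨hX, -, W, n, c, η, hW, hpW, hn, hconormal, hnull, hη, -, -, hdom, htarget, hshape⟩ := h
  have hm : m ≠ 0 := by
    rintro rfl
    exact hX (Subsingleton.elim _ _)
  obtain ⟨hunit, hnν, -⟩ := hconormal p hpW hp
  refine ⟨n, η, ⟨(hn.contDiffAt (hW.mem_nhds hpW)).of_le (by exact_mod_cast le_top), ?_, hunit, hnν,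
    hnull, hη, fun i => if (i : ℕ) < m - 1 then c i else η, ⟨m - 1, by omega⟩, by simp, hdom, ?_⟩,
    hshape⟩
  · filter_upwards [hW.mem_nhds hpW] with q hq hlq Z hZ
    rw [dotProduct_comm, (hconormal q hq hlq).2.2 Z hZ]
  · convert htarget using 2
    ext i j
    induction i using Fin.lastCases with
    | last =>
      have hne : m ≠ m - 1 := by omega
      have hnlt : ¬m < m - 1 := by omega
      simp [frameMatrix, Matrix.updateRow_apply, Fin.ext_iff, hne, hnlt]
    | cast i =>
      by_cases hi : (i : ℕ) = m - 1
      · simp [frameMatrix, Matrix.updateRow_apply, Fin.ext_iff, hi]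
      · have hlt : (i : ℕ) < m - 1 := by omega
        simp [frameMatrix, Matrix.updateRow_apply, Fin.ext_iff, hi, hlt]

namespace IsConormalAt

lemma eventually_fderiv_dotProduct_eq_zero (h : IsConormalAt f ν n p η)
    (hfr : IsFrontalAt f ν p) (hA2 : IsA2 f ν p) {ξ : (Fin m → ℝ) → Fin m → ℝ}
    (hξ : IsNullFieldAt f ν ξ p) :
    ∀ᶠ q in 𝓝 p, lamb f ν q = 0 → ∀ Z, fderiv ℝ f q Z ⬝ᵥ n q = 0 := by
  have htrans : ∀ᶠ q in 𝓝 p, fderiv ℝ (lamb f ν) q (ξ q) ≠ 0 :=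
    ((hfr.contDiffAt_lamb.continuousAt_fderiv one_ne_zero).clm_apply
      hξ.contDiffAt.continuousAt).eventually_ne (hξ.fderiv_lamb_ne_zero hA2)
  filter_upwards [h.eventually_orthogonal, hξ.eventually_null, htrans] with
    q horth hξq hne hq
  exact dotProduct_eq_zero_of_ker (φ := (fderiv ℝ (lamb f ν) q).toLinearMap)
    (T := (fderiv ℝ f q).toLinearMap) hne (hξq hq) (horth hq)

lemma fderiv_dotProduct_eq_zero (h : IsConormalAt f ν n p η) (hA2 : IsA2 f ν p) :
    ∀ Z, fderiv ℝ f p Z ⬝ᵥ n p = 0 :=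
  dotProduct_eq_zero_of_ker (φ := (fderiv ℝ (lamb f ν) p).toLinearMap)
    (T := (fderiv ℝ f p).toLinearMap) (hA2.2.2 η h.null_ne_zero h.null) h.null
    (h.eventually_orthogonal.self_of_nhds hA2.1)

lemma exists_fderiv_fderiv_dotProduct_eq (h : IsConormalAt f ν n p η) (hfr : IsFrontalAt f ν p)
    (hA2 : IsA2 f ν p) :
    ∃ r > 0, ∀ Z, fderiv ℝ (fderiv ℝ f) p Z η ⬝ᵥ n p = r * fderiv ℝ (lamb f ν) p Z := by
  obtain ⟨M, i, rfl, hM, hN⟩ := h.exists_frame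
  refine ⟨_, div_pos hM hN, fun Z => ?_⟩
  have hdet := det_updateRow_mul_dotProduct_self (frameMatrix f ν p M i (n p)) i.castSucc
    (fderiv ℝ (fderiv ℝ f) p Z (M i)) (n p) fun j hj => frameMatrix_dotProduct
      (h.fderiv_dotProduct_eq_zero hA2) (dotProduct_comm (n p) _ ▸ h.orthogonal_normal) hj
  simp only [frameMatrix, Matrix.updateRow_idem] at hdet hN ⊢
  rw [h.unit, mul_one, ← frameMatrix, ← hfr.det_mul_fderiv_lamb h.null] at hdet
  rw [div_mul_eq_mul_div, hdet, mul_div_cancel_right₀ _ hN.ne']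

lemma eq_smul (h : IsConormalAt f ν n p η) (hA2 : IsA2 f ν p) {v : Fin (m + 1) → ℝ}
    (hv : ∀ Z, fderiv ℝ f p Z ⬝ᵥ v = 0) (hνv : ν p ⬝ᵥ v = 0) : v = (v ⬝ᵥ n p) • n p := by
  obtain ⟨M, i, -, -, hN⟩ := h.exists_frame
  refine sub_eq_zero.1 (Matrix.eq_zero_of_mulVec_eq_zero hN.ne' (funext fun j => ?_))
  rcases eq_or_ne j i.castSucc with rfl | hj
  · simp [Matrix.mulVec, frameMatrix, dotProduct_sub, h.unit, dotProduct_comm (n p) v]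
  · refine frameMatrix_dotProduct (fun Z => ?_) ?_ hj
    · simp [dotProduct_sub, hv, h.fderiv_dotProduct_eq_zero hA2]
    · simp [dotProduct_sub, hνv, dotProduct_comm (ν p) (n p), h.orthogonal_normal]

lemma fderiv_normal_eq_smul (h : IsConormalAt f ν n p η) (hfr : IsFrontalAt f ν p)
    (hA2 : IsA2 f ν p) {Z : Fin m → ℝ} (hZ : ∀ Y, fderiv ℝ f p Z ⬝ᵥ fderiv ℝ ν p Y = 0) :
    fderiv ℝ ν p Z = (fderiv ℝ ν p Z ⬝ᵥ n p) • n p :=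
  h.eq_smul hA2 (fun Y => (hfr.secondForm_comm Y Z).trans (hZ Y))
    (by rw [dotProduct_comm, hfr.fderiv_normal_dotProduct_normal])

end IsConormalAt

end Conormal

section Curvature

section GramDet

variable {ι : Type*} [Fintype ι]

/-- The Gram determinant of two vectors; the denominator of `Kext`. -/
def gramDet (a b : ι → ℝ) : ℝ := (a ⬝ᵥ a) * (b ⬝ᵥ b) - (a ⬝ᵥ b) ^ 2

lemma gramDet_nonneg (a b : ι → ℝ) : 0 ≤ gramDet a b := by
  have hcs := Finset.sum_mul_sq_le_sq_mul_sq Finset.univ a b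
  simp only [gramDet, dotProduct, ← sq]
  linarith

lemma gramDet_pos {a b n : ι → ℝ} (ha : a ≠ 0) (han : a ⬝ᵥ n = 0) (hbn : b ⬝ᵥ n ≠ 0) :
    0 < gramDet a b := by
  have haa : 0 < a ⬝ᵥ a := Matrix.dotProduct_self_star_pos_iff.2 ha
  set u := (a ⬝ᵥ a) • b - (a ⬝ᵥ b) • a with hu
  have hun : u ⬝ᵥ n = (a ⬝ᵥ a) * (b ⬝ᵥ n) := by
    simp [hu, sub_dotProduct, han]
  have hu₀ : u ≠ 0 := by
    intro h0
    rw [h0, zero_dotProduct] at hun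
    exact mul_ne_zero haa.ne' hbn hun.symm
  have huu : u ⬝ᵥ u = (a ⬝ᵥ a) * gramDet a b := by
    simp only [hu, gramDet, sub_dotProduct, dotProduct_sub, smul_dotProduct, dotProduct_smul,
      smul_eq_mul, dotProduct_comm b a]
    ring
  exact pos_of_mul_pos_right (huu ▸ Matrix.dotProduct_self_star_pos_iff.2 hu₀) haa.le

lemma gramDet_smul_right (c : ℝ) (a b : ι → ℝ) : gramDet a (c • b) = c ^ 2 * gramDet a b := by
  simp only [gramDet, smul_dotProduct, dotProduct_smul, smul_eq_mul]
  ring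

lemma continuous_gramDet : Continuous fun x : (ι → ℝ) × (ι → ℝ) => gramDet x.1 x.2 := by
  unfold gramDet dotProduct
  fun_prop

lemma tendsto_gramDet_div_sq {a b : ℝ → ι → ℝ} {b' : ι → ℝ} (ha : ContinuousAt a 0)
    (hb : HasDerivAt b b' 0) (hb₀ : b 0 = 0) :
    Tendsto (fun t => gramDet (a t) (b t) / t ^ 2) (𝓝[≠] 0) (𝓝 (gramDet (a 0) b')) := by
  have hlim := (continuous_gramDet.tendsto (a 0, b')).comp
    ((ha.tendsto.mono_left nhdsWithin_le_nhds).prodMk_nhds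
      (tendsto_inv_smul_of_hasDerivAt_zero hb hb₀))
  refine hlim.congr fun t => ?_
  rw [Function.comp_apply, gramDet_smul_right, inv_pow, ← div_eq_inv_mul]

end GramDet

variable {m : ℕ} {f ν n : (Fin m → ℝ) → Fin (m + 1) → ℝ} {ξ : (Fin m → ℝ) → Fin m → ℝ}
  {p η X Z : Fin m → ℝ} {δ : ℝ}

lemma mul_gramDet_le_of_le_Kext {Y : Fin m → ℝ} (hδ : 0 < δ) (h : δ ≤ Kext f ν p X Y) :
    δ * gramDet (fderiv ℝ f p X) (fderiv ℝ f p Y) ≤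
      (fderiv ℝ f p X ⬝ᵥ fderiv ℝ ν p X) * (fderiv ℝ f p Y ⬝ᵥ fderiv ℝ ν p Y) := by
  rw [Kext, ← gramDet] at h
  have hpos : 0 < gramDet (fderiv ℝ f p X) (fderiv ℝ f p Y) := by
    refine (gramDet_nonneg _ _).lt_of_ne fun h0 => ?_
    rw [← h0, div_zero] at h
    exact hδ.not_ge h
  rw [le_div_iff₀ hpos] at h
  exact h.trans (sub_le_self _ (sq_nonneg _))

/-- The extrinsic curvatures of all planes through the vector field `ξ` are bounded below by `δ`
at the regular points near `p`. -/
def KextEventuallyGe (f ν : (Fin m → ℝ) → Fin (m + 1) → ℝ) (ξ : (Fin m → ℝ) → Fin m → ℝ)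
    (p : Fin m → ℝ) (δ : ℝ) : Prop :=
  ∀ᶠ q in 𝓝 p, lamb f ν q ≠ 0 → ∀ X, LinearIndependent ℝ ![X, ξ q] → δ ≤ Kext f ν q X (ξ q)

namespace IsNullFieldAt

lemma eventually_mul_gramDet_le (hξ : IsNullFieldAt f ν ξ p) (hfr : IsFrontalAt f ν p)
    (hA2 : IsA2 f ν p) (hδ : 0 < δ) (hK : KextEventuallyGe f ν ξ p δ)
    (hZ : fderiv ℝ (lamb f ν) p Z = 0) (hZ₀ : Z ≠ 0) :
    ∀ᶠ t in 𝓝[≠] (0 : ℝ), letI q := p + t • ξ p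
      δ * gramDet (fderiv ℝ f q Z) (fderiv ℝ f q (ξ q)) ≤
        (fderiv ℝ f q Z ⬝ᵥ fderiv ℝ ν q Z) * (fderiv ℝ f q (ξ q) ⬝ᵥ fderiv ℝ ν q (ξ q)) := by
  have hregular : ∀ᶠ t in 𝓝[≠] (0 : ℝ), lamb f ν (p + t • ξ p) ≠ 0 :=
    (hasDerivAt_comp_line (hfr.contDiffAt_lamb.differentiableAt one_ne_zero) (ξ p)).eventually_ne
      (hξ.fderiv_lamb_ne_zero hA2)
  have htransverse : ∀ᶠ q in 𝓝 p, fderiv ℝ (lamb f ν) p (ξ q) ≠ 0 :=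
    ((fderiv ℝ (lamb f ν) p).continuous.continuousAt.comp hξ.contDiffAt.continuousAt).eventually_ne
      (hξ.fderiv_lamb_ne_zero hA2)
  filter_upwards [hregular, nhdsWithin_le_nhds ((tendsto_line p (ξ p)).eventually hK),
    nhdsWithin_le_nhds ((tendsto_line p (ξ p)).eventually htransverse)] with t hreg hKt htr
  exact mul_gramDet_le_of_le_Kext hδ (hKt hreg Z
    (linearIndependent_pair_of_ker (φ := (fderiv ℝ (lamb f ν) p).toLinearMap) hZ hZ₀ htr))

lemma hasDerivAt_line (hξ : IsNullFieldAt f ν ξ p) (hfr : IsFrontalAt f ν p) (v : Fin m → ℝ) :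
    HasDerivAt (fun t : ℝ => fderiv ℝ f (p + t • v) (ξ (p + t • v)))
      (fderiv ℝ (fun q => fderiv ℝ f q (ξ q)) p v) 0 :=
  hasDerivAt_comp_line
    ((contDiffAt_fderiv_apply hfr.contDiffAt hξ.contDiffAt).differentiableAt one_ne_zero) v

lemma hasDerivAt_secondForm_line (hξ : IsNullFieldAt f ν ξ p) (hfr : IsFrontalAt f ν p)
    (hA2 : IsA2 f ν p) (v : Fin m → ℝ) :
    HasDerivAt (fun t : ℝ => letI q := p + t • v; fderiv ℝ f q (ξ q) ⬝ᵥ fderiv ℝ ν q (ξ q))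
      (fderiv ℝ (fun q => fderiv ℝ f q (ξ q)) p v ⬝ᵥ fderiv ℝ ν p (ξ p)) 0 := by
  have hderiv := hasDerivAt_comp_line (hfr.differentiableAt_secondForm_self hξ.contDiffAt) v
  rwa [fderiv_dotProduct_apply
    ((contDiffAt_fderiv_apply hfr.contDiffAt hξ.contDiffAt).differentiableAt one_ne_zero)
    ((contDiffAt_fderiv_apply hfr.contDiffAt_normal hξ.contDiffAt).differentiableAt one_ne_zero),
    hξ.null hA2, zero_dotProduct, add_zero] at hderiv

/-- Along the line `p + t ξ_p` the product `II(Z, Z) II(ξ, ξ)` is nonnegative and vanishes at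
`t = 0`, so its derivative there vanishes. -/
lemma secondForm_mul_eq_zero (hξ : IsNullFieldAt f ν ξ p) (hfr : IsFrontalAt f ν p)
    (hA2 : IsA2 f ν p) (hδ : 0 < δ) (hK : KextEventuallyGe f ν ξ p δ)
    (hZ : fderiv ℝ (lamb f ν) p Z = 0) :
    (fderiv ℝ f p Z ⬝ᵥ fderiv ℝ ν p Z) *
      (fderiv ℝ (fun q => fderiv ℝ f q (ξ q)) p (ξ p) ⬝ᵥ fderiv ℝ ν p (ξ p)) = 0 := by
  rcases eq_or_ne Z 0 with rfl | hZ₀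
  · simp
  have hII := hasDerivAt_comp_line
    (hfr.differentiableAt_secondForm_self (contDiffAt_const (c := Z))) (ξ p)
  have hmul := mul_deriv_eq_zero_of_mul_nonneg hII
    (hξ.hasDerivAt_secondForm_line hfr hA2 (ξ p)) (by simp [hξ.null hA2])
    ((hξ.eventually_mul_gramDet_le hfr hA2 hδ hK hZ hZ₀).mono fun t ht =>
      (mul_nonneg hδ.le (gramDet_nonneg _ _)).trans ht)
  simpa using hmul

lemma mul_gramDet_le_fderiv_mul (hξ : IsNullFieldAt f ν ξ p) (hfr : IsFrontalAt f ν p)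
    (hA2 : IsA2 f ν p) (hδ : 0 < δ) (hK : KextEventuallyGe f ν ξ p δ)
    (hZ : fderiv ℝ (lamb f ν) p Z = 0) (hZ₀ : Z ≠ 0)
    (hZZ : fderiv ℝ f p Z ⬝ᵥ fderiv ℝ ν p Z = 0) :
    δ * gramDet (fderiv ℝ f p Z) (fderiv ℝ (fun q => fderiv ℝ f q (ξ q)) p (ξ p)) ≤
      fderiv ℝ (fun q => fderiv ℝ f q Z ⬝ᵥ fderiv ℝ ν q Z) p (ξ p) *
        (fderiv ℝ (fun q => fderiv ℝ f q (ξ q)) p (ξ p) ⬝ᵥ fderiv ℝ ν p (ξ p)) := by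
  have hII := hasDerivAt_comp_line
    (hfr.differentiableAt_secondForm_self (contDiffAt_const (c := Z))) (ξ p)
  have hdfZ := hasDerivAt_comp_line ((contDiffAt_fderiv_apply hfr.contDiffAt
    (contDiffAt_const (c := Z))).differentiableAt one_ne_zero) (ξ p)
  have hgram := (tendsto_gramDet_div_sq hdfZ.continuousAt (hξ.hasDerivAt_line hfr (ξ p))
    (by simp [hξ.null hA2])).const_mul δ
  simp only [zero_smul, add_zero] at hgram
  refine le_mul_deriv_of_le_mul hII (hξ.hasDerivAt_secondForm_line hfr hA2 (ξ p))
    (by simpa using hZZ) (by simp [hξ.null hA2])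
    (hgram.congr fun t => (mul_div_assoc _ _ _).symm)
    (hξ.eventually_mul_gramDet_le hfr hA2 hδ hK hZ hZ₀)

end IsNullFieldAt

namespace IsConormalAt

lemma fderiv_fderiv_null_dotProduct_eq_zero (h : IsConormalAt f ν n p η)
    (hfr : IsFrontalAt f ν p) (hA2 : IsA2 f ν p) (hX : fderiv ℝ (lamb f ν) p X = 0)
    (hZ : fderiv ℝ f p Z = 0) : fderiv ℝ (fderiv ℝ f) p X Z ⬝ᵥ n p = 0 := by
  obtain ⟨r, -, hr⟩ := h.exists_fderiv_fderiv_dotProduct_eq hfr hA2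
  rw [hA2.eq_smul h.null h.null_ne_zero hZ, map_smul, smul_dotProduct, hr, hX, mul_zero, smul_zero]

lemma fderiv_null_dotProduct_mul_pos (h : IsConormalAt f ν n p η) (hfr : IsFrontalAt f ν p)
    (hA2 : IsA2 f ν p) (hξ : IsNullFieldAt f ν ξ p) :
    0 < (fderiv ℝ (fun q => fderiv ℝ f q (ξ q)) p (ξ p) ⬝ᵥ n p) *
      fderiv ℝ (lamb f ν) p η := by
  obtain ⟨r, hr, hrη⟩ := h.exists_fderiv_fderiv_dotProduct_eq hfr hA2
  have hη : fderiv ℝ (lamb f ν) p η ≠ 0 := hA2.2.2 η h.null_ne_zero h.null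
  have hξη := hA2.eq_smul h.null h.null_ne_zero (hξ.null hA2)
  set s := fderiv ℝ (lamb f ν) p (ξ p) / fderiv ℝ (lamb f ν) p η
  have hs : s ≠ 0 := div_ne_zero (hξ.fderiv_lamb_ne_zero hA2) hη
  have hval : fderiv ℝ (fun q => fderiv ℝ f q (ξ q)) p (ξ p) ⬝ᵥ n p =
      s ^ 2 * (r * fderiv ℝ (lamb f ν) p η) := by
    rw [fderiv_fderiv_apply hfr.contDiffAt (hξ.contDiffAt.differentiableAt one_ne_zero),
      add_dotProduct, h.fderiv_dotProduct_eq_zero hA2, add_zero, hξη, map_smul, map_smul,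
      smul_apply, smul_smul, smul_dotProduct, hrη, smul_eq_mul, sq]
  rw [hval]
  calc 0 < s ^ 2 * r * fderiv ℝ (lamb f ν) p η ^ 2 := by positivity
    _ = _ := by ring

lemma fderiv_fderiv_dotProduct_eq_neg (h : IsConormalAt f ν n p η) (hfr : IsFrontalAt f ν p)
    (hA2 : IsA2 f ν p) (hξ : IsNullFieldAt f ν ξ p) (hX : fderiv ℝ (lamb f ν) p X = 0)
    (Z : Fin m → ℝ) :
    fderiv ℝ (fderiv ℝ f) p X Z ⬝ᵥ n p = -(fderiv ℝ f p Z ⬝ᵥ fderiv ℝ n p X) := by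
  have hdfZ := contDiffAt_fderiv_apply hfr.contDiffAt (contDiffAt_const (c := Z))
  have hzero : fderiv ℝ (fun q => fderiv ℝ f q Z ⬝ᵥ n q) p X = 0 :=
    fderiv_apply_eq_zero_of_eventually_eq_zero_on_zeroSet hfr.contDiffAt_lamb
      (contDiffAt_dotProduct hdfZ h.contDiffAt) hA2.1 hA2.2.1
      ((h.eventually_fderiv_dotProduct_eq_zero hfr hA2 hξ).mono fun q hq hlq => hq hlq Z) hX
  rw [fderiv_dotProduct_apply (hdfZ.differentiableAt one_ne_zero)
    (h.contDiffAt.differentiableAt one_ne_zero), fderiv_fderiv_const_apply hfr.contDiffAt] at hzero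
  linarith

lemma fderiv_fderiv_self_dotProduct_eq_neg_mul (h : IsConormalAt f ν n p η)
    (hfr : IsFrontalAt f ν p) (hA2 : IsA2 f ν p) (hξ : IsNullFieldAt f ν ξ p)
    (hX : fderiv ℝ (lamb f ν) p X = 0) {a : ℝ}
    (hshape : fderiv ℝ n p X - (fderiv ℝ n p X ⬝ᵥ ν p) • ν p = a • fderiv ℝ f p X) :
    fderiv ℝ (fderiv ℝ f) p X X ⬝ᵥ n p = -(a * (fderiv ℝ f p X ⬝ᵥ fderiv ℝ f p X)) := by
  have hdot := congr(fderiv ℝ f p X ⬝ᵥ $hshape)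
  rw [dotProduct_sub, dotProduct_smul, hfr.eventually_tangent.self_of_nhds X, smul_zero, sub_zero,
    dotProduct_smul, smul_eq_mul] at hdot
  rw [h.fderiv_fderiv_dotProduct_eq_neg hfr hA2 hξ hX, hdot]

lemma fderiv_secondForm_self_of_null (h : IsConormalAt f ν n p η) (hfr : IsFrontalAt f ν p)
    (hA2 : IsA2 f ν p) (hX : fderiv ℝ (lamb f ν) p X = 0)
    (hII : ∀ Y, fderiv ℝ f p X ⬝ᵥ fderiv ℝ ν p Y = 0) (hZ : fderiv ℝ f p Z = 0) :
    fderiv ℝ (fun q => fderiv ℝ f q X ⬝ᵥ fderiv ℝ ν q X) p Z =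
      -(fderiv ℝ (fderiv ℝ f) p X X ⬝ᵥ fderiv ℝ ν p Z) := by
  have hmixed : fderiv ℝ (fderiv ℝ f) p X Z ⬝ᵥ fderiv ℝ ν p X = 0 := by
    rw [h.fderiv_normal_eq_smul hfr hA2 hII, dotProduct_smul,
      h.fderiv_fderiv_null_dotProduct_eq_zero hfr hA2 hX hZ, smul_zero]
  have hcodazzi := hfr.fderiv_secondForm_comm X Z X
  rw [hmixed, hZ, zero_dotProduct] at hcodazzi
  rw [hfr.fderiv_secondForm_apply, hfr.isSymmSndFDerivAt.eq Z X,
    hfr.isSymmSndFDerivAt_normal.eq Z X, hmixed]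
  linarith

lemma secondForm_eq_zero (h : IsConormalAt f ν n p η) (hfr : IsFrontalAt f ν p)
    (hfront : ∀ X, fderiv ℝ f p X = 0 → fderiv ℝ ν p X = 0 → X = 0) (hA2 : IsA2 f ν p)
    (hξ : IsNullFieldAt f ν ξ p) (hδ : 0 < δ) (hK : KextEventuallyGe f ν ξ p δ)
    (hX : fderiv ℝ (lamb f ν) p X = 0) :
    ∀ Y, fderiv ℝ f p X ⬝ᵥ fderiv ℝ ν p Y = 0 := by
  have hderiv : fderiv ℝ (fun q => fderiv ℝ f q (ξ q)) p (ξ p) ⬝ᵥ fderiv ℝ ν p (ξ p) ≠ 0 := by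
    have hν := h.fderiv_normal_eq_smul hfr hA2 (Z := ξ p) (by simp [hξ.null hA2])
    rw [hν, dotProduct_smul]
    refine mul_ne_zero (fun h0 => hξ.ne_zero (hfront _ (hξ.null hA2) ?_))
      (left_ne_zero_of_mul (h.fderiv_null_dotProduct_mul_pos hfr hA2 hξ).ne')
    rw [hν, h0, zero_smul]
  have hdiag : ∀ Z, fderiv ℝ (lamb f ν) p Z = 0 → fderiv ℝ f p Z ⬝ᵥ fderiv ℝ ν p Z = 0 :=
    fun Z hZ => (mul_eq_zero.1 (hξ.secondForm_mul_eq_zero hfr hA2 hδ hK hZ)).resolve_right hderiv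
  have htangent : ∀ Y, fderiv ℝ (lamb f ν) p Y = 0 → fderiv ℝ f p Y ⬝ᵥ fderiv ℝ ν p X = 0 := by
    intro Y hY
    have hsum := hdiag (X + Y) (by rw [map_add, hX, hY, add_zero])
    simp only [map_add, add_dotProduct, dotProduct_add, hdiag X hX, hdiag Y hY,
      hfr.secondForm_comm X Y] at hsum
    linarith
  intro Y
  rw [hfr.secondForm_comm]
  exact dotProduct_eq_zero_of_ker (φ := (fderiv ℝ (lamb f ν) p).toLinearMap)
    (T := (fderiv ℝ f p).toLinearMap) (hξ.fderiv_lamb_ne_zero hA2) (hξ.null hA2) htangent Y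

lemma fderiv_fderiv_self_dotProduct_mul_neg (h : IsConormalAt f ν n p η)
    (hfr : IsFrontalAt f ν p)
    (hfront : ∀ Z, fderiv ℝ f p Z = 0 → fderiv ℝ ν p Z = 0 → Z = 0) (hA2 : IsA2 f ν p)
    (hξ : IsNullFieldAt f ν ξ p) (hδ : 0 < δ) (hK : KextEventuallyGe f ν ξ p δ)
    (hX : fderiv ℝ (lamb f ν) p X = 0) (hX₀ : X ≠ 0) :
    (fderiv ℝ (fderiv ℝ f) p X X ⬝ᵥ n p) *
      (fderiv ℝ (fun q => fderiv ℝ f q (ξ q)) p (ξ p) ⬝ᵥ n p) < 0 := by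
  have hII := h.secondForm_eq_zero hfr hfront hA2 hξ hδ hK hX
  have hgram := gramDet_pos (fun hdfX => hA2.2.2 X hX₀ hdfX hX) (h.fderiv_dotProduct_eq_zero hA2 X)
    (left_ne_zero_of_mul (h.fderiv_null_dotProduct_mul_pos hfr hA2 hξ).ne')
  have hlower := (mul_pos hδ hgram).trans_le
    (hξ.mul_gramDet_le_fderiv_mul hfr hA2 hδ hK hX hX₀ (hII X))
  rw [h.fderiv_secondForm_self_of_null hfr hA2 hX hII (hξ.null hA2),
    h.fderiv_normal_eq_smul hfr hA2 (Z := ξ p) (by simp [hξ.null hA2]), dotProduct_smul,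
    dotProduct_smul, smul_eq_mul, smul_eq_mul] at hlower
  refine neg_of_mul_neg_right (a := (fderiv ℝ ν p (ξ p) ⬝ᵥ n p) ^ 2) ?_ (sq_nonneg _)
  linarith

end IsConormalAt

end Curvature

lemma IsFrontalAt.of_contDiffOn {m : ℕ} {f ν : (Fin m → ℝ) → Fin (m + 1) → ℝ}
    {U : Set (Fin m → ℝ)} {p : Fin m → ℝ} (hU : U ∈ 𝓝 p) (hf : ContDiffOn ℝ 2 f U)
    (hν : ContDiffOn ℝ 2 ν U) (hunit : ∀ q ∈ U, ν q ⬝ᵥ ν q = 1)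
    (htangent : ∀ q ∈ U, ∀ k, pd k f q ⬝ᵥ ν q = 0) : IsFrontalAt f ν p where
  contDiffAt := hf.contDiffAt hU
  contDiffAt_normal := hν.contDiffAt hU
  eventually_unit := eventually_of_mem hU hunit
  eventually_tangent := by
    filter_upwards [hU] with q hq X
    rw [pi_eq_sum_univ' X, map_sum, sum_dotProduct]
    refine Finset.sum_eq_zero fun k _ => ?_
    rw [map_smul, smul_dotProduct, ← pd, htangent q hq k, smul_zero]

lemma sign_mul_pos_of_mul_pos {a b : ℝ} (h : 0 < a * b) : 0 < Real.sign b * a := by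
  rcases (right_ne_zero_of_mul h.ne').lt_or_gt with hb | hb
  · rw [Real.sign_of_neg hb]
    linarith [neg_of_mul_pos_left h hb.le]
  · rw [Real.sign_of_pos hb]
    linarith [pos_of_mul_pos_left h hb.le]

theorem singPrincCurv_neg_of_Kext_ge_delta_general {m : ℕ}
    {f ν : (Fin m → ℝ) → Fin (m + 1) → ℝ} {ξ : (Fin m → ℝ) → Fin m → ℝ} {p : Fin m → ℝ} {δ : ℝ}
    (hfr : IsFrontalAt f ν p)
    (hfront : ∀ X, fderiv ℝ f p X = 0 → fderiv ℝ ν p X = 0 → X = 0)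
    (hA2 : IsA2 f ν p) (hξ : IsNullFieldAt f ν ξ p)
    (hδ : 0 < δ) (hK : KextEventuallyGe f ν ξ p δ) :
    ∀ κ X, IsSingPrincCurvVec f ν p κ X → κ < 0 := by
  intro κ X hκ
  obtain ⟨n, η, h, hshape⟩ := hκ.exists_isConormalAt hA2.1
  obtain ⟨hX₀, hX, -⟩ := hκ
  have hcurv := h.fderiv_fderiv_self_dotProduct_mul_neg hfr hfront hA2 hξ hδ hK hX hX₀
  have hsign := sign_mul_pos_of_mul_pos (h.fderiv_null_dotProduct_mul_pos hfr hA2 hξ)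
  rw [h.fderiv_fderiv_self_dotProduct_eq_neg_mul hfr hA2 hξ hX hshape] at hcurv
  set w := fderiv ℝ (fun q => fderiv ℝ f q (ξ q)) p (ξ p) ⬝ᵥ n p
  set σ := Real.sign (fderiv ℝ (lamb f ν) p η)
  set I := fderiv ℝ f p X ⬝ᵥ fderiv ℝ f p X
  have hI : 0 ≤ I := Finset.sum_nonneg fun i _ => mul_self_nonneg _
  refine neg_of_mul_neg_left (b := I * (σ * w)) ?_ (by positivity)
  calc κ * (I * (σ * w)) = -(-σ * κ * I) * w := by ring
    _ < 0 := hcurv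

/-- If near an `A₂`-point `p` there are an extended null vector field `η̃` and `δ > 0`
with `K^ext(X ∧ η̃) ≥ δ` off the singular set, then the singular principal curvatures of
the front `(f, ν)` at `p` are all strictly negative. -/
theorem singPrincCurv_neg_of_Kext_ge_delta {m : ℕ} (hm : 2 ≤ m)
    (U : Set (Fin m → ℝ)) (hU : IsOpen U)
    (f ν : (Fin m → ℝ) → (Fin (m + 1) → ℝ))
    (hf : ContDiffOn ℝ (⊤ : ℕ∞) f U) (hν : ContDiffOn ℝ (⊤ : ℕ∞) ν U)
    (hν1 : ∀ q ∈ U, ν q ⬝ᵥ ν q = 1)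
    (htang : ∀ q ∈ U, ∀ k : Fin m, pd k f q ⬝ᵥ ν q = 0)
    (hfront : ∀ q ∈ U, ∀ X : Fin m → ℝ, fderiv ℝ f q X = 0 → fderiv ℝ ν q X = 0 → X = 0)
    (p : Fin m → ℝ) (hp : p ∈ U) (hA2 : IsA2 f ν p)
    (V₀ : Set (Fin m → ℝ)) (hV₀ : IsOpen V₀) (hpV₀ : p ∈ V₀)
    (hallA2 : ∀ q ∈ V₀ ∩ U, lamb f ν q = 0 → IsA2 f ν q)
    (V : Set (Fin m → ℝ)) (hV : IsOpen V) (hpV : p ∈ V) (hVU : V ⊆ U)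
    (η' : (Fin m → ℝ) → (Fin m → ℝ)) (hη' : ContDiffOn ℝ (⊤ : ℕ∞) η' V)
    (hnull : ∀ q ∈ V, lamb f ν q = 0 → fderiv ℝ f q (η' q) = 0 ∧ η' q ≠ 0)
    (δ : ℝ) (hδ : 0 < δ)
    (hKge : ∀ q ∈ V, lamb f ν q ≠ 0 → ∀ X : Fin m → ℝ,
      LinearIndependent ℝ ![X, η' q] → δ ≤ Kext f ν q X (η' q)) :
    ∀ (κ : ℝ) (X : Fin m → ℝ), IsSingPrincCurvVec f ν p κ X → κ < 0 := by
  have hUp : U ∈ 𝓝 p := hU.mem_nhds hp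
  have hVp : V ∈ 𝓝 p := hV.mem_nhds hpV
  have hle (r : ℕ) : (r : WithTop ℕ∞) ≤ (⊤ : ℕ∞) := by exact_mod_cast le_top
  have hξ : IsNullFieldAt f ν η' p :=
    { contDiffAt := (hη'.contDiffAt hVp).of_le (hle 1)
      ne_zero := (hnull p hpV hA2.1).2
      eventually_null := eventually_of_mem hVp fun q hq hlq => (hnull q hq hlq).1 }
  exact singPrincCurv_neg_of_Kext_ge_delta_general
    (.of_contDiffOn hUp (hf.of_le (hle 2)) (hν.of_le (hle 2)) hν1 htang) (hfront p hp) hA2 hξ hδ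
    (eventually_of_mem hVp hKge)
end
end

section
/- Let m ≥ 2, let U ⊆ ℝ^m be open, let (f, ν) be a frontal on U with values in ℝ^{m+1}, let p ∈ U be an A₂-point of f, and let X be a nonzero vector tangent at p to the singular hypersurface Σ. Then there exist an open set V ⊆ ℝ^m with coordinates (u_1,…,u_m), a point o ∈ V, and a diffeomorphism Φ from V onto an open neighborhood of p in U with Φ(o) = p such that, writing f̃ := f∘Φ and ν̃ := ν∘Φ: (1) Φ^{−1}(Σ) = {u ∈ V : u_m = 0}; (2) dΦ_o(∂_1) = X; (3) ∂_m f̃ = 0 at every point of {u_m = 0} (i.e. ∂_m is a null vector field along the singular set); and (4) ⟨∂_j f̃, ∂_m ∂_m f̃⟩ = 0 at o for every j = 1,…,m−1. -/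
open scoped Matrix

noncomputable section

open Set Filter Topology

/-! Along the singular hypersurface `{λ = 0}` the rows of the adjugate of `(∂_1 f, …, ∂_m f, ν)`
lie in the kernel of `df`, and at a point with `dλ ≠ 0` one of them does not vanish, by Jacobi's
formula for `d det`. This gives a smooth null field `η`, normalized by `dλ_p(η) = 1`. Straighten
the hypersurface by a chart `G` whose derivative at the origin sends `∂_1` to `X` and `∂_m` to
`η(p)`, and put `Φ(w + t ∂_m) = G(w) + t η(G(w)) + (t² / 2) Y`: the velocity of these parabolas
makes `∂_m` null along the hypersurface, while the acceleration `Y` is still free. Since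
`∂_m ∂_m (f ∘ Φ) = D²f_p(η, η) + df_p(Y)` at the origin, condition (4) is solved by the normal
equations for `df_p`. -/

section LinearAlgebra

theorem exists_forall_inner_add_map_eq_zero {𝕜 E F : Type*} [RCLike 𝕜] [AddCommGroup E] [Module 𝕜 E]
    [NormedAddCommGroup F] [InnerProductSpace 𝕜 F] (T : E →ₗ[𝕜] F)
    [(LinearMap.range T).HasOrthogonalProjection] (b : F) :
    ∃ y, ∀ v, inner 𝕜 (T v) (b + T y) = 0 := by
  obtain ⟨y, hy⟩ := (LinearMap.range T).starProjection_apply_mem b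
  refine ⟨-y, fun v => ?_⟩
  rw [map_neg, hy, ← sub_eq_add_neg]
  exact Submodule.inner_right_of_mem_orthogonal (LinearMap.mem_range_self T v)
    (Submodule.sub_starProjection_mem_orthogonal b)

theorem exists_forall_dotProduct_add_map_eq_zero {ι E : Type*} [Fintype ι] [AddCommGroup E]
    [Module ℝ E] (T : E →ₗ[ℝ] (ι → ℝ)) (b : ι → ℝ) :
    ∃ y, ∀ v, T v ⬝ᵥ (b + T y) = 0 := by
  obtain ⟨y, hy⟩ := exists_forall_inner_add_map_eq_zero
    ((WithLp.linearEquiv 2 ℝ (ι → ℝ)).symm.toLinearMap ∘ₗ T) (WithLp.toLp 2 b)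
  refine ⟨y, fun v => ?_⟩
  simpa [EuclideanSpace.inner_eq_star_dotProduct, dotProduct_comm] using hy v

variable {𝕜 E E' : Type*} [RCLike 𝕜] [NormedAddCommGroup E] [NormedSpace 𝕜 E]
  [NormedAddCommGroup E'] [NormedSpace 𝕜 E']

theorem exists_continuousLinearEquiv_apply_eq_and_comp_symm_eq [FiniteDimensional 𝕜 E]
    [FiniteDimensional 𝕜 E'] (hfin : Module.finrank 𝕜 E = Module.finrank 𝕜 E')
    {ℓ : E →L[𝕜] 𝕜} {ℓ' : E' →L[𝕜] 𝕜} {e x : E} {e' x' : E'} (he : ℓ e = 1)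
    (he' : ℓ' e' = 1) (hx : ℓ x = 0) (hx' : ℓ' x' = 0) (hx0 : x ≠ 0) (hx0' : x' ≠ 0) :
    ∃ A : E ≃L[𝕜] E', A e = e' ∧ A x = x' ∧ ℓ ∘L (A.symm : E' →L[𝕜] E) = ℓ' := by
  have hker : Module.finrank 𝕜 ℓ.ker = Module.finrank 𝕜 ℓ'.ker := by
    have h := Module.Dual.finrank_ker_add_one_of_ne_zero (f := (ℓ : E →ₗ[𝕜] 𝕜))
      fun h => by simpa [he] using DFunLike.congr_fun h e
    have h' := Module.Dual.finrank_ker_add_one_of_ne_zero (f := (ℓ' : E' →ₗ[𝕜] 𝕜))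
      fun h => by simpa [he'] using DFunLike.congr_fun h e'
    exact Nat.succ_injective (h.trans (hfin.trans h'.symm))
  let B₀ : ℓ.ker ≃L[𝕜] ℓ'.ker := .ofFinrankEq hker
  let y : ℓ.ker := ⟨x, hx⟩
  let y' : ℓ'.ker := ⟨x', hx'⟩
  obtain ⟨B, hB⟩ := SeparatingDual.exists_continuousLinearEquiv_apply_eq (R := 𝕜)
    (x := B₀ y) (y := y') (by simpa [y, Subtype.ext_iff] using hx0)
    (by simpa [y', Subtype.ext_iff] using hx0')
  let D : E ≃L[𝕜] 𝕜 × ℓ.ker := .equivOfRightInverse ℓ (.toSpanSingleton 𝕜 e) fun c => by simp [he]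
  let D' : E' ≃L[𝕜] 𝕜 × ℓ'.ker :=
    .equivOfRightInverse ℓ' (.toSpanSingleton 𝕜 e') fun c => by simp [he']
  have hDe : D e = (1, 0) := by ext <;> simp [D, he]
  have hDx : D x = (0, y) := by ext <;> simp [D, hx, y]
  refine ⟨D.trans (((ContinuousLinearEquiv.refl 𝕜 𝕜).prodCongr (B₀.trans B)).trans D'.symm),
    ?_, ?_, ?_⟩
  · simp [hDe, D']
  · simp [hDx, hB, D', y']
  · ext v
    simp [D, D', he]

end LinearAlgebra

section KerProj
variable {𝕜 E : Type*} [NontriviallyNormedField 𝕜] [NormedAddCommGroup E] [NormedSpace 𝕜 E]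

/-- The map `u ↦ u - ℓ u • e`, which for `ℓ e = 1` is the projection onto the hyperplane
`ker ℓ` along the line spanned by `e`. -/
def kerProj (ℓ : E →L[𝕜] 𝕜) (e : E) : E →L[𝕜] E :=
  ContinuousLinearMap.id 𝕜 E - ℓ.smulRight e

variable {ℓ : E →L[𝕜] 𝕜} {e : E}

theorem kerProj_apply (u : E) : kerProj ℓ e u = u - ℓ u • e := by simp [kerProj]

theorem kerProj_eq_self {u : E} (hu : ℓ u = 0) : kerProj ℓ e u = u := by simp [kerProj_apply, hu]

theorem map_kerProj (he : ℓ e = 1) (u : E) : ℓ (kerProj ℓ e u) = 0 := by simp [kerProj_apply, he]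

theorem kerProj_self (he : ℓ e = 1) : kerProj ℓ e e = 0 := by simp [kerProj_apply, he]

end KerProj

section InverseFunction
variable {𝕜 E F : Type*} [RCLike 𝕜] [NormedAddCommGroup E] [NormedSpace 𝕜 E] [CompleteSpace E]
  [NormedAddCommGroup F] [NormedSpace 𝕜 F] {n : WithTop ℕ∞}

theorem exists_openPartialHomeomorph_contDiffOn_symm (hn : n ≠ 0) {g : E → F} {W : Set E}
    (hW : IsOpen W) (hg : ContDiffOn 𝕜 n g W) {a : E} (ha : a ∈ W) {A : E ≃L[𝕜] F}
    (hA : HasFDerivAt g (A : E →L[𝕜] F) a) :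
    ∃ Φ : OpenPartialHomeomorph E F,
      Φ = g ∧ a ∈ Φ.source ∧ Φ.source ⊆ W ∧ ContDiffOn 𝕜 n Φ.symm Φ.target := by
  have hga : ContDiffAt 𝕜 n g a := hg.contDiffAt (hW.mem_nhds ha)
  let Φ := hga.toOpenPartialHomeomorph g hA hn
  let N := W ∩ fderiv 𝕜 g ⁻¹' range ((↑) : (E ≃L[𝕜] F) → (E →L[𝕜] F))
  have hN : IsOpen N :=
    (hg.continuousOn_fderiv_of_isOpen hW
      (ENat.one_le_iff_ne_zero_withTop.2 hn)).isOpen_inter_preimage hW ContinuousLinearEquiv.isOpen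
  have haN : a ∈ N := ⟨ha, A, hA.fderiv.symm⟩
  refine ⟨Φ.restrOpen N hN, rfl, ⟨hga.mem_toOpenPartialHomeomorph_source hA hn, haN⟩,
    fun x hx => hx.2.1, fun y hy => ContDiffAt.contDiffWithinAt ?_⟩
  obtain ⟨hxW, B, hB⟩ := ((Φ.restrOpen N hN).map_target hy).2
  have hgx : ContDiffAt 𝕜 n g ((Φ.restrOpen N hN).symm y) := hg.contDiffAt (hW.mem_nhds hxW)
  refine OpenPartialHomeomorph.contDiffAt_symm _ hy (f₀' := B) ?_ hgx
  rw [hB]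
  exact (hgx.differentiableAt hn).hasFDerivAt

end InverseFunction

section Det
variable {𝕜 E ι : Type*} [NontriviallyNormedField 𝕜] [NormedAddCommGroup E] [NormedSpace 𝕜 E]
  [Fintype ι] [DecidableEq ι] {M : E → Matrix ι ι 𝕜}

theorem contDiffOn_det {n : WithTop ℕ∞} {s : Set E}
    (hM : ∀ i j, ContDiffOn 𝕜 n (fun q => M q i j) s) :
    ContDiffOn 𝕜 n (fun q => (M q).det) s := by
  simp only [Matrix.det_apply]
  exact ContDiffOn.sum fun σ _ => (contDiffOn_prod fun i _ => hM (σ i) i).const_smul _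

theorem contDiffOn_adjugate {n : WithTop ℕ∞} {s : Set E}
    (hM : ∀ i j, ContDiffOn 𝕜 n (fun q => M q i j) s) (i j : ι) :
    ContDiffOn 𝕜 n (fun q => (M q).adjugate i j) s := by
  simp only [Matrix.adjugate_apply]
  refine contDiffOn_det fun a b => ?_
  obtain rfl | ha := eq_or_ne a j
  · simpa only [Matrix.updateRow_self] using contDiffOn_const
  · simpa only [Matrix.updateRow_ne ha] using hM a b

theorem hasFDerivAt_det {M' : ι → ι → E →L[𝕜] 𝕜} {p : E}
    (hM : ∀ i j, HasFDerivAt (fun q => M q i j) (M' i j) p) :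
    HasFDerivAt (fun q => (M q).det) (∑ i, ∑ j, (M p).adjugate j i • M' i j) p := by
  let D : ContinuousMultilinearMap 𝕜 (fun _ : ι => ι → 𝕜) 𝕜 :=
    { (Matrix.detRowAlternating (n := ι) (R := 𝕜)).toMultilinearMap with
      cont := (continuous_id (X := Matrix ι ι 𝕜)).matrix_det }
  refine (HasFDerivAt.multilinear_comp D (g := fun i q => M q i)
    fun i => hasFDerivAt_pi.2 (hM i)).congr_fderiv ?_
  ext v
  simp only [sum_apply, ContinuousLinearMap.comp_apply]
  refine Finset.sum_congr rfl fun i _ => ?_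
  change ((M p).updateRow i fun j => M' i j v).det = _
  rw [← Matrix.cramer_transpose_apply, Matrix.cramer_eq_adjugate_mulVec,
    ← Matrix.adjugate_transpose, Matrix.mulVec_eq_sum]
  simp [mul_comm]

theorem adjugate_ne_zero_of_fderiv_det_ne_zero {p : E}
    (hM : ∀ i j, DifferentiableAt 𝕜 (fun q => M q i j) p)
    (hdet : fderiv 𝕜 (fun q => (M q).det) p ≠ 0) : (M p).adjugate ≠ 0 := by
  contrapose! hdet
  ext v
  simp [(hasFDerivAt_det fun i j => (hM i j).hasFDerivAt).fderiv, hdet]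

end Det

section SecondDerivative
variable {𝕜 D E F : Type*} [NontriviallyNormedField 𝕜] [NormedAddCommGroup D] [NormedSpace 𝕜 D]
  [NormedAddCommGroup E] [NormedSpace 𝕜 E] [NormedAddCommGroup F] [NormedSpace 𝕜 F]

theorem fderiv_fderiv_comp_apply {f : E → F} {Φ : D → E} {x : D} (v w : D)
    (hf : ContDiffAt 𝕜 2 f (Φ x)) (hΦ : ContDiffAt 𝕜 2 Φ x) :
    fderiv 𝕜 (fun u => fderiv 𝕜 (f ∘ Φ) u v) x w =
      fderiv 𝕜 (fderiv 𝕜 f) (Φ x) (fderiv 𝕜 Φ x w) (fderiv 𝕜 Φ x v) +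
        fderiv 𝕜 f (Φ x) (fderiv 𝕜 (fun u => fderiv 𝕜 Φ u v) x w) := by
  have hf' : DifferentiableAt 𝕜 (fderiv 𝕜 f) (Φ x) :=
    (hf.fderiv_right (m := 1) le_rfl).differentiableAt one_ne_zero
  have hΦ' : DifferentiableAt 𝕜 (fun u => fderiv 𝕜 Φ u v) x :=
    ((hΦ.fderiv_right (m := 1) le_rfl).differentiableAt one_ne_zero).clm_apply
      (differentiableAt_const v)
  have hΦx : DifferentiableAt 𝕜 Φ x := hΦ.differentiableAt two_ne_zero
  have hchain : (fun u => fderiv 𝕜 (f ∘ Φ) u v) =ᶠ[𝓝 x]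
      fun u => fderiv 𝕜 f (Φ u) (fderiv 𝕜 Φ u v) := by
    filter_upwards [hΦ.continuousAt.eventually (hf.eventually (by simp)), hΦ.eventually (by simp)]
      with u hfu hΦu
    rw [fderiv_comp u (hfu.differentiableAt two_ne_zero) (hΦu.differentiableAt two_ne_zero)]
    rfl
  have hfΦ : HasFDerivAt (fun u => fderiv 𝕜 f (Φ u)) _ x :=
    hf'.hasFDerivAt.comp x hΦx.hasFDerivAt
  rw [hchain.fderiv_eq, (hfΦ.clm_apply hΦ'.hasFDerivAt).fderiv]
  simp [add_comm]

end SecondDerivative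

section ParabolicExtension
variable {𝕜 E E' : Type*} [NontriviallyNormedField 𝕜] [NormedAddCommGroup E]
  [NormedSpace 𝕜 E] [NormedAddCommGroup E'] [NormedSpace 𝕜 E'] {ℓ : E →L[𝕜] 𝕜} {e u : E}
  {γ ξ : E → E'} {Y : E'}

/-- The map sending `w + t • e`, `w ∈ ker ℓ`, to the time-`t` point of the parabola that starts
at `γ w` with velocity `ξ w` and acceleration `Y` (for `ℓ e = 1`). -/
def parabolicExtension (ℓ : E →L[𝕜] 𝕜) (e : E) (γ ξ : E → E') (Y : E') (u : E) : E' :=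
  γ (kerProj ℓ e u) + ℓ u • ξ (kerProj ℓ e u) + (ℓ u ^ 2 / 2) • Y

theorem parabolicExtension_of_map_eq_zero (hu : ℓ u = 0) :
    parabolicExtension ℓ e γ ξ Y u = γ u := by
  simp [parabolicExtension, kerProj_eq_self hu, hu]

theorem contDiffOn_parabolicExtension {n : WithTop ℕ∞} {S : Set E}
    (hγ : ContDiffOn 𝕜 n γ S) (hξ : ContDiffOn 𝕜 n ξ S) :
    ContDiffOn 𝕜 n (parabolicExtension ℓ e γ ξ Y) (kerProj ℓ e ⁻¹' S) := by
  have hπ : ContDiffOn 𝕜 n (kerProj ℓ e) (kerProj ℓ e ⁻¹' S) := (kerProj ℓ e).contDiff.contDiffOn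
  have hℓ : ContDiffOn 𝕜 n ℓ (kerProj ℓ e ⁻¹' S) := ℓ.contDiff.contDiffOn
  exact ((hγ.comp hπ fun _ => id).add (hℓ.smul (hξ.comp hπ fun _ => id))).add
    (((hℓ.pow 2).div_const 2).smul contDiffOn_const)

theorem hasFDerivAt_parabolicExtension [NeZero (2 : 𝕜)] {γ' ξ' : E →L[𝕜] E'}
    (hγ : HasFDerivAt γ γ' (kerProj ℓ e u)) (hξ : HasFDerivAt ξ ξ' (kerProj ℓ e u)) :
    HasFDerivAt (parabolicExtension ℓ e γ ξ Y)
      (γ' ∘L kerProj ℓ e + ℓ u • ξ' ∘L kerProj ℓ e + ℓ.smulRight (ξ (kerProj ℓ e u) + ℓ u • Y))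
      u := by
  have hγπ := hγ.comp u (kerProj ℓ e).hasFDerivAt
  have hξπ := hξ.comp u (kerProj ℓ e).hasFDerivAt
  have hℓ : HasFDerivAt ℓ ℓ u := ℓ.hasFDerivAt
  have hsq : HasFDerivAt (fun w => ℓ w ^ 2 / 2) (ℓ u • ℓ) u := by
    simp only [div_eq_mul_inv]
    refine ((hℓ.pow 2).mul_const (2⁻¹ : 𝕜)).congr_fderiv ?_
    ext v
    simp [← mul_assoc, inv_mul_cancel₀ (two_ne_zero (α := 𝕜))]
  refine ((hγπ.add (hℓ.smul hξπ)).add (hsq.smul_const Y)).congr_fderiv ?_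
  ext v
  simp only [add_apply, smul_apply, ContinuousLinearMap.comp_apply,
    ContinuousLinearMap.smulRight_apply, smul_eq_mul, Function.comp_apply]
  module

theorem fderiv_parabolicExtension_apply [NeZero (2 : 𝕜)] (he : ℓ e = 1)
    (hγ : DifferentiableAt 𝕜 γ (kerProj ℓ e u)) (hξ : DifferentiableAt 𝕜 ξ (kerProj ℓ e u)) :
    fderiv 𝕜 (parabolicExtension ℓ e γ ξ Y) u e = ξ (kerProj ℓ e u) + ℓ u • Y := by
  rw [(hasFDerivAt_parabolicExtension hγ.hasFDerivAt hξ.hasFDerivAt).fderiv]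
  simp [kerProj_self he, he]

theorem fderiv_fderiv_parabolicExtension_apply [NeZero (2 : 𝕜)] (he : ℓ e = 1)
    (hγ : ∀ᶠ w in 𝓝 (0 : E), DifferentiableAt 𝕜 γ w)
    (hξ : ∀ᶠ w in 𝓝 (0 : E), DifferentiableAt 𝕜 ξ w) :
    fderiv 𝕜 (fun w => fderiv 𝕜 (parabolicExtension ℓ e γ ξ Y) w e) 0 e = Y := by
  have hπ0 : Tendsto (kerProj ℓ e) (𝓝 0) (𝓝 0) := by simpa using (kerProj ℓ e).continuous.tendsto 0
  have hvel : (fun w => fderiv 𝕜 (parabolicExtension ℓ e γ ξ Y) w e) =ᶠ[𝓝 0]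
      fun w => ξ (kerProj ℓ e w) + ℓ w • Y := by
    filter_upwards [hπ0.eventually hγ, hπ0.eventually hξ] with w hγw hξw
    exact fderiv_parabolicExtension_apply he hγw hξw
  have hξ0 : HasFDerivAt ξ (fderiv 𝕜 ξ 0) (kerProj ℓ e 0) := by
    simpa using hξ.self_of_nhds.hasFDerivAt
  have hacc : HasFDerivAt (fun w => ξ (kerProj ℓ e w) + ℓ w • Y)
      (fderiv 𝕜 ξ 0 ∘L kerProj ℓ e + ℓ.smulRight Y) 0 :=
    (hξ0.comp 0 (kerProj ℓ e).hasFDerivAt).add (ℓ.hasFDerivAt.smul_const Y)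
  rw [hvel.fderiv_eq, hacc.fderiv]
  simp [kerProj_self he, he]

end ParabolicExtension

section ZeroSet
variable {𝕜 E : Type*} [NontriviallyNormedField 𝕜] [NormedAddCommGroup E] [NormedSpace 𝕜 E]

theorem eventually_eq_zero_iff_of_hasStrictFDerivAt [CompleteSpace E] {ℓ : E →L[𝕜] 𝕜} {e : E}
    {g : E → 𝕜} (he : ℓ e = 1) (hg : HasStrictFDerivAt g ℓ 0)
    (hker : ∀ᶠ u in 𝓝 (0 : E), ℓ u = 0 → g u = 0) :
    ∀ᶠ u in 𝓝 (0 : E), g u = 0 ↔ ℓ u = 0 := by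
  -- At a zero `u` of `g`, the locally injective `H` takes the same value at `u` and at `kerProj u`.
  let H : E → E := fun u => kerProj ℓ e u + g u • e
  have hH : HasStrictFDerivAt H (ContinuousLinearEquiv.refl 𝕜 E : E →L[𝕜] E) 0 :=
    ((kerProj ℓ e).hasStrictFDerivAt.add (hg.smul_const e)).congr_fderiv (by
      ext v; simp [kerProj_apply])
  have hπ0 : Tendsto (kerProj ℓ e) (𝓝 0) (𝓝 0) := by simpa using (kerProj ℓ e).continuous.tendsto 0
  have hinv := hH.eventually_left_inverse
  filter_upwards [hker, hπ0.eventually hker, hinv, hπ0.eventually hinv] with u hu hπu hinvu hinvπu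
  refine ⟨fun hgu => ?_, hu⟩
  have hHeq : H u = H (kerProj ℓ e u) := by
    simp [H, hgu, hπu (map_kerProj he u), kerProj_eq_self (map_kerProj he u)]
  have hfix : u = kerProj ℓ e u := hinvu.symm.trans ((congrArg _ hHeq).trans hinvπu)
  rw [hfix, map_kerProj he]

end ZeroSet

section AdaptedChart
variable {𝕜 E E' F : Type*} [NontriviallyNormedField 𝕜] [NormedAddCommGroup E]
  [NormedSpace 𝕜 E] [NormedAddCommGroup E'] [NormedSpace 𝕜 E'] [NormedAddCommGroup F]
  [NormedSpace 𝕜 F] {n : WithTop ℕ∞} {ℓ : E →L[𝕜] 𝕜} {e : E} {U : Set E'} {p : E'} {φ : E' → 𝕜}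

/-- A chart `Φ` with values in `U`, centred at `p` and with derivative `A` there, that is adapted
to the hypersurface `{φ = 0}` and to the vector field `η` transversal to it: `{φ = 0}` becomes the
hyperplane `ker ℓ`, the coordinate direction `e` becomes `η` along it, and `Y` is the second
derivative of `Φ` in the direction `e` at the origin. The directional second derivative is the
iterated first derivative, as in `pd k (pd k f)`. -/
structure IsAdaptedChart (n : WithTop ℕ∞) (Φ : OpenPartialHomeomorph E E') (U : Set E') (p : E')
    (φ : E' → 𝕜) (η : E' → E') (ℓ : E →L[𝕜] 𝕜) (e : E) (A : E →L[𝕜] E') (Y : E') : Prop where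
  zero_mem_source : 0 ∈ Φ.source
  map_zero : Φ 0 = p
  target_subset : Φ.target ⊆ U
  contDiffOn : ContDiffOn 𝕜 n Φ Φ.source
  contDiffOn_symm : ContDiffOn 𝕜 n Φ.symm Φ.target
  fderiv_zero : fderiv 𝕜 Φ 0 = A
  map_eq_zero_iff : ∀ u ∈ Φ.source, φ (Φ u) = 0 ↔ ℓ u = 0
  fderiv_apply : ∀ u ∈ Φ.source, ℓ u = 0 → fderiv 𝕜 Φ u e = η (Φ u)
  fderiv_fderiv_apply : fderiv 𝕜 (fun u => fderiv 𝕜 Φ u e) 0 e = Y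

namespace IsAdaptedChart

variable {f : E' → F} {Φ : OpenPartialHomeomorph E E'} {η : E' → E'} {A : E →L[𝕜] E'} {Y : E'}

theorem contDiffAt (h : IsAdaptedChart n Φ U p φ η ℓ e A Y) {u : E} (hu : u ∈ Φ.source) :
    ContDiffAt 𝕜 n Φ u :=
  h.contDiffOn.contDiffAt (Φ.open_source.mem_nhds hu)

theorem contDiffAt_of_contDiffOn (h : IsAdaptedChart n Φ U p φ η ℓ e A Y) (hU : IsOpen U)
    (hf : ContDiffOn 𝕜 n f U) {u : E} (hu : u ∈ Φ.source) : ContDiffAt 𝕜 n f (Φ u) :=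
  hf.contDiffAt (hU.mem_nhds (h.target_subset (Φ.map_source hu)))

theorem fderiv_comp_apply (h : IsAdaptedChart n Φ U p φ η ℓ e A Y) (hn : n ≠ 0) (hU : IsOpen U)
    (hf : ContDiffOn 𝕜 n f U) {u : E} (hu : u ∈ Φ.source) (v : E) :
    fderiv 𝕜 (f ∘ Φ) u v = fderiv 𝕜 f (Φ u) (fderiv 𝕜 Φ u v) := by
  rw [fderiv_comp u ((h.contDiffAt_of_contDiffOn hU hf hu).differentiableAt hn)
    ((h.contDiffAt hu).differentiableAt hn), ContinuousLinearMap.comp_apply]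

theorem fderiv_comp_zero_apply (h : IsAdaptedChart n Φ U p φ η ℓ e A Y) (hn : n ≠ 0)
    (hU : IsOpen U) (hf : ContDiffOn 𝕜 n f U) (v : E) :
    fderiv 𝕜 (f ∘ Φ) 0 v = fderiv 𝕜 f p (A v) := by
  rw [h.fderiv_comp_apply hn hU hf h.zero_mem_source, h.map_zero, h.fderiv_zero]

theorem fderiv_comp_apply_of_map_eq_zero (h : IsAdaptedChart n Φ U p φ η ℓ e A Y) (hn : n ≠ 0)
    (hU : IsOpen U) (hf : ContDiffOn 𝕜 n f U) {u : E} (hu : u ∈ Φ.source) (hℓu : ℓ u = 0) :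
    fderiv 𝕜 (f ∘ Φ) u e = fderiv 𝕜 f (Φ u) (η (Φ u)) := by
  rw [h.fderiv_comp_apply hn hU hf hu, h.fderiv_apply u hu hℓu]

theorem fderiv_fderiv_comp_apply (h : IsAdaptedChart n Φ U p φ η ℓ e A Y) (hn : 2 ≤ n)
    (hU : IsOpen U) (hf : ContDiffOn 𝕜 n f U) :
    fderiv 𝕜 (fun u => fderiv 𝕜 (f ∘ Φ) u e) 0 e =
      fderiv 𝕜 (fderiv 𝕜 f) p (A e) (A e) + fderiv 𝕜 f p Y := by
  have hfp := (h.contDiffAt_of_contDiffOn hU hf h.zero_mem_source).of_le hn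
  have hΦ0 := (h.contDiffAt h.zero_mem_source).of_le hn
  rw [_root_.fderiv_fderiv_comp_apply e e hfp hΦ0, h.map_zero, h.fderiv_zero,
    h.fderiv_fderiv_apply]

end IsAdaptedChart

end AdaptedChart

section ExistsAdaptedChart
variable {𝕜 E E' : Type*} [RCLike 𝕜] [NormedAddCommGroup E] [NormedSpace 𝕜 E]
  [NormedAddCommGroup E'] [NormedSpace 𝕜 E'] {n : WithTop ℕ∞} {ℓ : E →L[𝕜] 𝕜} {e : E}
  {U : Set E'} {p : E'} {φ : E' → 𝕜} {A : E ≃L[𝕜] E'}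

theorem exists_straightening [CompleteSpace E'] (hn : n ≠ 0) (hU : IsOpen U) (hp : p ∈ U)
    (hφ : ContDiffOn 𝕜 n φ U) (hφp : φ p = 0) (hφ' : HasFDerivAt φ (ℓ ∘L (A.symm : E' →L[𝕜] E)) p)
    (he : ℓ e = 1) :
    ∃ G : OpenPartialHomeomorph E E', 0 ∈ G.source ∧ G 0 = p ∧ G.target ⊆ U ∧
      ContDiffOn 𝕜 n G G.source ∧ HasFDerivAt G (A : E →L[𝕜] E') 0 ∧
      ∀ u ∈ G.source, φ (G u) = ℓ u := by
  let H : E' → E := fun q => kerProj ℓ e (A.symm (q - p)) + φ q • e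
  have hH : ContDiffOn 𝕜 n H U :=
    ((kerProj ℓ e ∘L (A.symm : E' →L[𝕜] E)).contDiff.comp_contDiffOn
      (contDiffOn_id.sub contDiffOn_const)).add (hφ.smul contDiffOn_const)
  have hHp : H p = 0 := by simp [H, hφp]
  have hℓH (q : E') : ℓ (H q) = φ q := by simp [H, map_kerProj he, he]
  have hH' : HasFDerivAt H (A.symm : E' →L[𝕜] E) p := by
    have hlin : HasFDerivAt (fun q => kerProj ℓ e (A.symm (q - p)))
        (kerProj ℓ e ∘L (A.symm : E' →L[𝕜] E)) p :=
      (kerProj ℓ e ∘L (A.symm : E' →L[𝕜] E)).hasFDerivAt.comp p ((hasFDerivAt_id p).sub_const p)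
    refine (hlin.add (hφ'.smul_const e)).congr_fderiv ?_
    ext v
    simp [kerProj_apply]
  obtain ⟨Ψ, hΨ, hpΨ, hΨU, hΨsymm⟩ := exists_openPartialHomeomorph_contDiffOn_symm hn hU hH hp hH'
  have h0 : (0 : E) ∈ Ψ.target := by simpa [hΨ, hHp] using Ψ.map_source hpΨ
  have hsymm0 : Ψ.symm 0 = p := by simpa [hΨ, hHp] using Ψ.left_inv hpΨ
  refine ⟨Ψ.symm, h0, hsymm0, hΨU, hΨsymm, ?_, fun u hu => ?_⟩
  · exact Ψ.hasFDerivAt_symm h0 (f' := A.symm) (by rwa [hsymm0, hΨ])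
  · rw [← hℓH, ← hΨ, Ψ.right_inv hu]

theorem exists_adapted_map [CompleteSpace E'] (hn : n ≠ 0) (hU : IsOpen U) (hp : p ∈ U)
    (hφ : ContDiffOn 𝕜 n φ U) (hφp : φ p = 0) (hφ' : HasFDerivAt φ (ℓ ∘L (A.symm : E' →L[𝕜] E)) p)
    (he : ℓ e = 1) {η : E' → E'} (hη : ContDiffOn 𝕜 n η U) (hAe : A e = η p) (Y : E') :
    ∃ (P : E → E') (S : Set E), IsOpen S ∧ 0 ∈ S ∧ ContDiffOn 𝕜 n P S ∧ P 0 = p ∧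
      HasFDerivAt P (A : E →L[𝕜] E') 0 ∧
      (∀ u ∈ S, ℓ u = 0 → φ (P u) = 0 ∧ fderiv 𝕜 P u e = η (P u)) ∧
      fderiv 𝕜 (fun u => fderiv 𝕜 P u e) 0 e = Y := by
  obtain ⟨G, h0G, hG0, hGU, hG, hG', hφG⟩ := exists_straightening hn hU hp hφ hφp hφ' he
  have hηG : ContDiffOn 𝕜 n (η ∘ G) G.source := hη.comp hG fun u hu => hGU (G.map_source hu)
  have hGd {u : E} (hu : u ∈ G.source) : DifferentiableAt 𝕜 G u :=
    (hG.contDiffAt (G.open_source.mem_nhds hu)).differentiableAt hn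
  have hηGd {u : E} (hu : u ∈ G.source) : DifferentiableAt 𝕜 (η ∘ G) u :=
    (hηG.contDiffAt (G.open_source.mem_nhds hu)).differentiableAt hn
  refine ⟨parabolicExtension ℓ e G (η ∘ G) Y, kerProj ℓ e ⁻¹' G.source,
    G.open_source.preimage (kerProj ℓ e).continuous, by simpa using h0G,
    contDiffOn_parabolicExtension hG hηG, ?_, ?_, fun u hu hℓu => ?_, ?_⟩
  · rw [parabolicExtension_of_map_eq_zero (map_zero ℓ), hG0]
  · refine (hasFDerivAt_parabolicExtension (by simpa using hG')
      (by simpa using (hηGd h0G).hasFDerivAt)).congr_fderiv ?_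
    ext v
    simp [kerProj_apply, hG0, hAe]
  · rw [fderiv_parabolicExtension_apply he (hGd hu) (hηGd hu),
      parabolicExtension_of_map_eq_zero hℓu, hℓu, zero_smul, add_zero, kerProj_eq_self hℓu]
    rw [mem_preimage, kerProj_eq_self hℓu] at hu
    exact ⟨(hφG u hu).trans hℓu, rfl⟩
  · exact fderiv_fderiv_parabolicExtension_apply he
      (eventually_of_mem (G.open_source.mem_nhds h0G) fun u => hGd)
      (eventually_of_mem (G.open_source.mem_nhds h0G) fun u => hηGd)

theorem exists_isAdaptedChart [CompleteSpace E] [CompleteSpace E'] (hn : n ≠ 0) (hU : IsOpen U)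
    (hp : p ∈ U) (hφ : ContDiffOn 𝕜 n φ U) (hφp : φ p = 0)
    (hφ' : HasFDerivAt φ (ℓ ∘L (A.symm : E' →L[𝕜] E)) p) (he : ℓ e = 1) {η : E' → E'}
    (hη : ContDiffOn 𝕜 n η U) (hAe : A e = η p) (Y : E') :
    ∃ Φ : OpenPartialHomeomorph E E', IsAdaptedChart n Φ U p φ η ℓ e A Y := by
  obtain ⟨P, S, hS, h0S, hP, hP0, hP', hPS, hPY⟩ :=
    exists_adapted_map hn hU hp hφ hφp hφ' he hη hAe Y
  have hpU : P 0 ∈ U := by rwa [hP0]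
  have hφP : HasStrictFDerivAt (φ ∘ P) ℓ 0 := by
    have hφPn : ContDiffAt 𝕜 n (φ ∘ P) 0 :=
      (hφ.contDiffAt (hU.mem_nhds hpU)).comp 0 (hP.contDiffAt (hS.mem_nhds h0S))
    refine hφPn.hasStrictFDerivAt' (((hP0 ▸ hφ').comp 0 hP').congr_fderiv ?_) hn
    ext v
    simp
  obtain ⟨N, hNφ, hN, h0N⟩ := mem_nhds_iff.1 (eventually_eq_zero_iff_of_hasStrictFDerivAt he hφP
    (eventually_of_mem (hS.mem_nhds h0S) fun u hu hℓu => (hPS u hu hℓu).1))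
  have hSU : IsOpen (S ∩ P ⁻¹' U) := hP.continuousOn.isOpen_inter_preimage hS hU
  obtain ⟨Φ, rfl, h0Φ, hΦS, hΦsymm⟩ := exists_openPartialHomeomorph_contDiffOn_symm hn
    (hSU.inter hN) (hP.mono fun u hu => hu.1.1) ⟨⟨h0S, hpU⟩, h0N⟩ hP'
  exact ⟨Φ,
    { zero_mem_source := h0Φ
      map_zero := hP0
      target_subset := fun y hy => Φ.right_inv hy ▸ (hΦS (Φ.map_target hy)).1.2
      contDiffOn := hP.mono fun u hu => (hΦS hu).1.1
      contDiffOn_symm := hΦsymm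
      fderiv_zero := hP'.fderiv
      map_eq_zero_iff := fun u hu => hNφ (hΦS hu).2
      fderiv_apply := fun u hu hℓu => (hPS u (hΦS hu).1.1 hℓu).2
      fderiv_fderiv_apply := hPY }⟩

end ExistsAdaptedChart

section PartialDerivative
variable {m N : ℕ} {f : (Fin m → ℝ) → (Fin N → ℝ)} {q : Fin m → ℝ}

theorem fderiv_apply_eq_sum_pd (v : Fin m → ℝ) : fderiv ℝ f q v = ∑ k, v k • pd k f q := by
  conv_lhs => rw [← Finset.univ_sum_single v, map_sum]
  refine Finset.sum_congr rfl fun k _ => ?_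
  rw [pd, ← map_smul, ← Pi.single_smul', smul_eq_mul, mul_one]

theorem fderiv_apply_dotProduct_eq_zero {w : Fin N → ℝ} (hw : ∀ k, pd k f q ⬝ᵥ w = 0)
    (v : Fin m → ℝ) : fderiv ℝ f q v ⬝ᵥ w = 0 := by
  simp [fderiv_apply_eq_sum_pd, sum_dotProduct, hw]

end PartialDerivative

section Frontal
variable {m : ℕ} {U : Set (Fin m → ℝ)} {f ν : (Fin m → ℝ) → (Fin (m + 1) → ℝ)}
  {p q : Fin m → ℝ} {n : WithTop ℕ∞}

/-- The matrix with rows `∂_1 f, …, ∂_m f, ν`, whose determinant is `lamb f ν`. -/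
def frontalMatrix (f ν : (Fin m → ℝ) → (Fin (m + 1) → ℝ)) (q : Fin m → ℝ) :
    Matrix (Fin (m + 1)) (Fin (m + 1)) ℝ :=
  Matrix.of (Fin.snoc (fun k : Fin m => pd k f q) (ν q))

theorem det_frontalMatrix : (frontalMatrix f ν q).det = lamb f ν q := rfl

theorem frontalMatrix_castSucc (k : Fin m) : frontalMatrix f ν q k.castSucc = pd k f q :=
  Fin.snoc_castSucc (α := fun _ => Fin (m + 1) → ℝ) (ν q) (fun k => pd k f q) k

theorem frontalMatrix_last : frontalMatrix f ν q (Fin.last m) = ν q :=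
  Fin.snoc_last (α := fun _ => Fin (m + 1) → ℝ) (ν q) fun k => pd k f q

theorem contDiffOn_frontalMatrix (hU : IsOpen U) (hf : ContDiffOn ℝ (n + 1) f U)
    (hν : ContDiffOn ℝ n ν U) (i j : Fin (m + 1)) :
    ContDiffOn ℝ n (fun q => frontalMatrix f ν q i j) U := by
  refine contDiffOn_pi.1 ?_ j
  induction i using Fin.lastCases with
  | last => simpa only [frontalMatrix_last] using hν
  | cast k =>
    simpa only [frontalMatrix_castSucc, pd] using
      (hf.fderiv_of_isOpen hU le_rfl).clm_apply contDiffOn_const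

theorem contDiffOn_lamb (hU : IsOpen U) (hf : ContDiffOn ℝ (n + 1) f U)
    (hν : ContDiffOn ℝ n ν U) : ContDiffOn ℝ n (lamb f ν) U :=
  contDiffOn_det (contDiffOn_frontalMatrix hU hf hν)

theorem vecMul_frontalMatrix (a : Fin (m + 1) → ℝ) :
    a ᵥ* frontalMatrix f ν q = fderiv ℝ f q (Fin.init a) + a (Fin.last m) • ν q := by
  simp only [Matrix.vecMul_eq_sum, Fin.sum_univ_castSucc, frontalMatrix_castSucc,
    frontalMatrix_last, fderiv_apply_eq_sum_pd, Fin.init]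

theorem vecMul_frontalMatrix_eq_zero (hν1 : ν q ⬝ᵥ ν q = 1) (htang : ∀ k, pd k f q ⬝ᵥ ν q = 0)
    {a : Fin (m + 1) → ℝ} (ha : a ᵥ* frontalMatrix f ν q = 0) :
    a (Fin.last m) = 0 ∧ fderiv ℝ f q (Fin.init a) = 0 := by
  rw [vecMul_frontalMatrix] at ha
  have hlast : a (Fin.last m) = 0 := by
    simpa [add_dotProduct, fderiv_apply_dotProduct_eq_zero htang, hν1] using
      congrArg (· ⬝ᵥ ν q) ha
  exact ⟨hlast, by simpa [hlast] using ha⟩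

/-- The first `m` entries of the `i`-th row of the adjugate of `frontalMatrix f ν`: a smooth vector
field on the whole domain that lies in `ker df` along the singular set. -/
def nullField (f ν : (Fin m → ℝ) → (Fin (m + 1) → ℝ)) (i : Fin (m + 1)) (q : Fin m → ℝ) :
    Fin m → ℝ :=
  Fin.init ((frontalMatrix f ν q).adjugate i)

theorem contDiffOn_nullField (hU : IsOpen U) (hf : ContDiffOn ℝ (n + 1) f U)
    (hν : ContDiffOn ℝ n ν U) (i : Fin (m + 1)) :
    ContDiffOn ℝ n (nullField f ν i) U :=
  contDiffOn_pi.2 fun k => contDiffOn_adjugate (contDiffOn_frontalMatrix hU hf hν) i k.castSucc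

theorem adjugate_vecMul_frontalMatrix (hq : lamb f ν q = 0) (i : Fin (m + 1)) :
    (frontalMatrix f ν q).adjugate i ᵥ* frontalMatrix f ν q = 0 := by
  rw [← Matrix.mul_apply_eq_vecMul, Matrix.adjugate_mul, det_frontalMatrix, hq, zero_smul]
  rfl

theorem fderiv_nullField (hν1 : ν q ⬝ᵥ ν q = 1) (htang : ∀ k, pd k f q ⬝ᵥ ν q = 0)
    (hq : lamb f ν q = 0) (i : Fin (m + 1)) : fderiv ℝ f q (nullField f ν i q) = 0 :=
  (vecMul_frontalMatrix_eq_zero hν1 htang (adjugate_vecMul_frontalMatrix hq i)).2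

theorem exists_nullField_ne_zero (hn : n ≠ 0) (hU : IsOpen U) (hf : ContDiffOn ℝ (n + 1) f U)
    (hν : ContDiffOn ℝ n ν U) (hp : p ∈ U) (hν1 : ν p ⬝ᵥ ν p = 1)
    (htang : ∀ k, pd k f p ⬝ᵥ ν p = 0) (hlamb : lamb f ν p = 0)
    (hdlamb : fderiv ℝ (lamb f ν) p ≠ 0) : ∃ i, nullField f ν i p ≠ 0 := by
  have hM (i j : Fin (m + 1)) : DifferentiableAt ℝ (fun q => frontalMatrix f ν q i j) p :=
    ((contDiffOn_frontalMatrix hU hf hν i j).contDiffAt (hU.mem_nhds hp)).differentiableAt hn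
  by_contra! hnull
  refine adjugate_ne_zero_of_fderiv_det_ne_zero hM hdlamb ?_
  ext i j
  have hlast :=
    (vecMul_frontalMatrix_eq_zero hν1 htang (adjugate_vecMul_frontalMatrix hlamb i)).1
  induction j using Fin.lastCases with
  | last => exact hlast
  | cast k => exact congrFun (hnull i) k

theorem IsA2.exists_null_field (hA2 : IsA2 f ν p) (hn : n ≠ 0) (hU : IsOpen U)
    (hf : ContDiffOn ℝ (n + 1) f U) (hν : ContDiffOn ℝ n ν U)
    (hν1 : ∀ q ∈ U, ν q ⬝ᵥ ν q = 1) (htang : ∀ q ∈ U, ∀ k, pd k f q ⬝ᵥ ν q = 0) (hp : p ∈ U) :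
    ∃ η : (Fin m → ℝ) → (Fin m → ℝ), ContDiffOn ℝ n η U ∧
      (∀ q ∈ U, lamb f ν q = 0 → fderiv ℝ f q (η q) = 0) ∧ fderiv ℝ (lamb f ν) p (η p) = 1 := by
  obtain ⟨hlamb, hdlamb, htrans⟩ := hA2
  obtain ⟨i, hi⟩ := exists_nullField_ne_zero hn hU hf hν hp (hν1 p hp) (htang p hp) hlamb hdlamb
  have hnull (q) (hq : q ∈ U) (hlq : lamb f ν q = 0) : fderiv ℝ f q (nullField f ν i q) = 0 :=
    fderiv_nullField (hν1 q hq) (htang q hq) hlq i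
  set c : ℝ := fderiv ℝ (lamb f ν) p (nullField f ν i p)
  have hc : c ≠ 0 := htrans _ hi (hnull p hp hlamb)
  refine ⟨c⁻¹ • nullField f ν i, (contDiffOn_nullField hU hf hν i).const_smul c⁻¹,
    fun q hq hlq => ?_, ?_⟩
  · rw [Pi.smul_apply, map_smul, hnull q hq hlq, smul_zero]
  · rw [Pi.smul_apply, map_smul, smul_eq_mul, inv_mul_cancel₀ hc]

theorem IsA2.exists_isAdaptedChart_forall_dotProduct_eq_zero {E : Type*} [NormedAddCommGroup E]
    [NormedSpace ℝ E] [FiniteDimensional ℝ E] (hE : Module.finrank ℝ E = m) {ℓ : E →L[ℝ] ℝ}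
    {e x : E} (he : ℓ e = 1) (hx : ℓ x = 0) (hx0 : x ≠ 0) (hA2 : IsA2 f ν p) (hn : n ≠ 0)
    (hU : IsOpen U) (hf : ContDiffOn ℝ (n + 1) f U) (hν : ContDiffOn ℝ n ν U)
    (hν1 : ∀ q ∈ U, ν q ⬝ᵥ ν q = 1) (htang : ∀ q ∈ U, ∀ k, pd k f q ⬝ᵥ ν q = 0) (hp : p ∈ U)
    {X : Fin m → ℝ} (hX0 : X ≠ 0) (hXtan : fderiv ℝ (lamb f ν) p X = 0) :
    ∃ (Φ : OpenPartialHomeomorph E (Fin m → ℝ)) (η : (Fin m → ℝ) → (Fin m → ℝ))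
      (A : E →L[ℝ] (Fin m → ℝ)) (Y : Fin m → ℝ),
      IsAdaptedChart n Φ U p (lamb f ν) η ℓ e A Y ∧ A x = X ∧
      (∀ q ∈ U, lamb f ν q = 0 → fderiv ℝ f q (η q) = 0) ∧
      ∀ v, fderiv ℝ f p v ⬝ᵥ (fderiv ℝ (fderiv ℝ f) p (A e) (A e) + fderiv ℝ f p Y) = 0 := by
  obtain ⟨η, hη, hηf, hηp⟩ := hA2.exists_null_field hn hU hf hν hν1 htang hp
  obtain ⟨A, hAη, hAX, hA⟩ := exists_continuousLinearEquiv_apply_eq_and_comp_symm_eq (𝕜 := ℝ)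
    (hE.trans (by simp)) he hηp hx hXtan hx0 hX0
  obtain ⟨Y, hY⟩ := exists_forall_dotProduct_add_map_eq_zero (fderiv ℝ f p).toLinearMap
    (fderiv ℝ (fderiv ℝ f) p (A e) (A e))
  have hlamb := contDiffOn_lamb hU hf hν
  have hlamb' := ((hlamb.contDiffAt (hU.mem_nhds hp)).differentiableAt hn).hasFDerivAt
  have : CompleteSpace E := FiniteDimensional.complete ℝ E
  obtain ⟨Φ, hΦ⟩ := exists_isAdaptedChart hn hU hp hlamb hA2.1 (hA ▸ hlamb') he hη hAη Y
  exact ⟨Φ, η, A, Y, hΦ, hAX, hηf, hY⟩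

end Frontal

theorem coordinate_lemma_A2_general {m : ℕ} {i l : Fin m} (hil : l ≠ i) {n : WithTop ℕ∞}
    (hn : 2 ≤ n)
    (U : Set (Fin m → ℝ)) (hU : IsOpen U)
    (f ν : (Fin m → ℝ) → (Fin (m + 1) → ℝ))
    (hf : ContDiffOn ℝ (n + 1) f U) (hν : ContDiffOn ℝ n ν U)
    (hν1 : ∀ q ∈ U, ν q ⬝ᵥ ν q = 1)
    (htang : ∀ q ∈ U, ∀ k : Fin m, pd k f q ⬝ᵥ ν q = 0)
    (p : Fin m → ℝ) (hp : p ∈ U) (hA2 : IsA2 f ν p)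
    (X : Fin m → ℝ) (hX0 : X ≠ 0) (hXtan : fderiv ℝ (lamb f ν) p X = 0) :
    ∃ (V : Set (Fin m → ℝ)) (o : Fin m → ℝ) (Φ Ψ : (Fin m → ℝ) → (Fin m → ℝ)),
      IsOpen V ∧ o ∈ V ∧ ContDiffOn ℝ n Φ V ∧
      IsOpen (Φ '' V) ∧ Φ '' V ⊆ U ∧ Φ o = p ∧
      ContDiffOn ℝ n Ψ (Φ '' V) ∧
      (∀ x ∈ V, Ψ (Φ x) = x) ∧ (∀ y ∈ Φ '' V, Φ (Ψ y) = y) ∧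
      (∀ x ∈ V, (lamb f ν (Φ x) = 0 ↔ x l = 0)) ∧
      fderiv ℝ Φ o (Pi.single i 1) = X ∧
      (∀ x ∈ V, x l = 0 → pd l (f ∘ Φ) x = 0) ∧
      (∀ j : Fin m, pd j (f ∘ Φ) o ⬝ᵥ pd l (pd l (f ∘ Φ)) o = 0) := by
  have hn0 : n ≠ 0 := (two_pos.trans_le hn).ne'
  have hfn : ContDiffOn ℝ n f U := hf.of_le le_self_add
  obtain ⟨Φ, η, A, Y, hΦ, hAX, hη, hY⟩ :=
    hA2.exists_isAdaptedChart_forall_dotProduct_eq_zero (Module.finrank_fin_fun ℝ)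
      (ℓ := ContinuousLinearMap.proj l) (e := Pi.single l 1) (x := Pi.single i 1) (by simp)
      (by simp [hil]) (by simp) hn0 hU hf hν hν1 htang hp hX0 hXtan
  refine ⟨Φ.source, 0, Φ, Φ.symm, ?_⟩
  rw [Φ.image_source_eq_target]
  refine ⟨Φ.open_source, hΦ.zero_mem_source, hΦ.contDiffOn, Φ.open_target, hΦ.target_subset,
    hΦ.map_zero, hΦ.contDiffOn_symm, fun _ => Φ.left_inv, fun _ => Φ.right_inv,
    hΦ.map_eq_zero_iff, hΦ.fderiv_zero ▸ hAX, fun u hu hul => ?_, fun j => ?_⟩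
  · exact (hΦ.fderiv_comp_apply_of_map_eq_zero hn0 hU hfn hu hul).trans
      (hη _ (hΦ.target_subset (Φ.map_source hu)) ((hΦ.map_eq_zero_iff u hu).2 hul))
  · have hvel : pd j (f ∘ Φ) 0 = _ := hΦ.fderiv_comp_zero_apply hn0 hU hfn (Pi.single j 1)
    have hacc : pd l (pd l (f ∘ Φ)) 0 = _ := hΦ.fderiv_fderiv_comp_apply hn hU hfn
    exact (congrArg₂ (· ⬝ᵥ ·) hvel hacc).trans (hY _)

/-- The coordinate lemma at an `A₂`-point: around an `A₂`-point `p` of a frontal `(f, ν)`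
and for any nonzero vector `X` tangent at `p` to the singular hypersurface
`Σ = {λ = 0}`, there is a coordinate system `Φ : V → U`, `Φ(o) = p`, such that
(1) `Φ^{-1}(Σ) = {u_m = 0}`, (2) `dΦ_o(∂_1) = X`, (3) `∂_m` is a null direction along
`{u_m = 0}`, and (4) `⟨∂_j f̃, ∂_m ∂_m f̃⟩ = 0` at `o` for `j = 1, …, m−1`,
where `f̃ = f ∘ Φ`. -/
theorem coordinate_lemma_A2 {m : ℕ} (hm : 2 ≤ m)
    (U : Set (Fin m → ℝ)) (hU : IsOpen U)
    (f ν : (Fin m → ℝ) → (Fin (m + 1) → ℝ))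
    (hf : ContDiffOn ℝ (⊤ : ℕ∞) f U) (hν : ContDiffOn ℝ (⊤ : ℕ∞) ν U)
    (hν1 : ∀ q ∈ U, ν q ⬝ᵥ ν q = 1)
    (htang : ∀ q ∈ U, ∀ k : Fin m, pd k f q ⬝ᵥ ν q = 0)
    (p : Fin m → ℝ) (hp : p ∈ U) (hA2 : IsA2 f ν p)
    (X : Fin m → ℝ) (hX0 : X ≠ 0) (hXtan : fderiv ℝ (lamb f ν) p X = 0) :
    ∃ (V : Set (Fin m → ℝ)) (o : Fin m → ℝ) (Φ Ψ : (Fin m → ℝ) → (Fin m → ℝ)),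
      IsOpen V ∧ o ∈ V ∧ ContDiffOn ℝ (⊤ : ℕ∞) Φ V ∧
      IsOpen (Φ '' V) ∧ Φ '' V ⊆ U ∧ Φ o = p ∧
      ContDiffOn ℝ (⊤ : ℕ∞) Ψ (Φ '' V) ∧
      (∀ x ∈ V, Ψ (Φ x) = x) ∧ (∀ y ∈ Φ '' V, Φ (Ψ y) = y) ∧
      (∀ x ∈ V, (lamb f ν (Φ x) = 0 ↔ x ⟨m - 1, by omega⟩ = 0)) ∧
      fderiv ℝ Φ o (Pi.single (⟨0, by omega⟩ : Fin m) 1) = X ∧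
      (∀ x ∈ V, x ⟨m - 1, by omega⟩ = 0 →
        pd (⟨m - 1, by omega⟩ : Fin m) (f ∘ Φ) x = 0) ∧
      (∀ j : Fin m, (j : ℕ) < m - 1 →
        pd j (f ∘ Φ) o ⬝ᵥ
          pd (⟨m - 1, by omega⟩ : Fin m) (pd (⟨m - 1, by omega⟩ : Fin m) (f ∘ Φ)) o
            = 0) := by
  obtain ⟨V, o, Φ, Ψ, hV, ho, hΦ, hΦV, hΦU, hΦo, hΨ, hΨΦ, hΦΨ, hlamb, hX, hnull, hacc⟩ :=
    coordinate_lemma_A2_general (i := ⟨0, by omega⟩) (l := ⟨m - 1, by omega⟩)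
      (Fin.ne_of_val_ne (by dsimp only; omega)) (n := (⊤ : ℕ∞)) (WithTop.coe_le_coe.2 le_top)
      U hU f ν hf hν hν1 htang p hp hA2 X hX0 hXtan
  exact ⟨V, o, Φ, Ψ, hV, ho, hΦ, hΦV, hΦU, hΦo, hΨ, hΨΦ, hΦΨ, hlamb, hX, hnull, fun j _ => hacc j⟩
end
end
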